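/- Let $p$ be a prime, $q$ a power of $p$, and $M\ge 2$ an integer. Write $\bar a=a^q$ for $a\in\mathbb F_{q^2}$, and let $f\mapsto\bar f$ be the coefficientwise extension to polynomials over $\mathbb F_{q^2}$. For $f\in\mathbb F_{q^2}[t]$ of degree $d$ with $f(0)\ne 0$ put $\tilde f(t)=\overline{f(0)}^{\,-1}\,t^{d}\,\bar f(t^{-1})$. A monic irreducible $f$ with $f(0)\neq 0$ and $\tilde f=f$ is called SCIM. Let $\widetilde N_M(q,d)$ be the number of SCIM polynomials $f$ of degree $d$ over $\mathbb F_{q^2}$ such that $f(x^M)$ has a SCIM factor of degree $d$. Let $\widetilde R_M(q,d)$ be the number of unordered pairs $\{g,\tilde g\}$, where $g$ is a monic irreducible polynomial of degree $d$ over $\mathbb F_{q^2}$ with $g(0)\ne 0$ and $g\neq\tilde g$ such that $g(x^M)$ has an irreducible factor of degree $d$ over $\mathbb F_{q^2}$. For $n\ge 1$ let $$\mathrm U(n,q^2)=\{A\in \mathrm{GL}(n,\mathbb F_{q^2}) : A\Lambda_n\bar A^{t}=\Lambda_n\},$$ where $\Lambda_n$ is the $n\times n$ anti-diagonal matrix with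 all anti-diagonal entries $1$, and let $cS_U^M(n,q)$ be the number of conjugacy classes of $\mathrm U(n,q^2)$ whose elements are separable (that is, have squarefree characteristic polynomial over $\mathbb F_{q^2}$) and are $M$-th powers of elements of $\mathrm U(n,q^2)$. Then, in the formal power series ring $\mathbb Q[[z]]$ (in which both infinite products converge), $$1+\sum_{n\ge1}cS_U^M(n,q)\,z^n=\prod_{d\ge 1,\ d\text{ odd}}(1+z^d)^{\widetilde N_M(q,d)}\ \prod_{d\ge1}(1+z^{2d})^{\widetilde R_M(q,d)}.$$ -/

import Mathlib

open Polynomial Matrix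

noncomputable section

/-- `f̃(t) = conj(f(0))⁻¹ · t^(deg f) · f̄(1/t)`, where the conjugation `σ` is applied
coefficientwise. It is only meant for polynomials with `f(0) ≠ 0`. -/
def tildePoly {F : Type*} [Field F] (σ : F →+* F) (f : F[X]) : F[X] :=
  Polynomial.C (σ (f.coeff 0))⁻¹ * (f.map σ).reverse

/-- A self-conjugate irreducible monic (SCIM) polynomial with nonzero constant term. -/
def IsSCIM {F : Type*} [Field F] (σ : F →+* F) (f : F[X]) : Prop :=
  f.Monic ∧ Irreducible f ∧ f.coeff 0 ≠ 0 ∧ tildePoly σ f = f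

/-- An `M̃`-power polynomial: a SCIM polynomial `f` such that `f(x^M)` has a SCIM factor of
degree `deg f`. -/
def IsMtildePowerPoly {F : Type*} [Field F] (σ : F →+* F) (M : ℕ) (f : F[X]) : Prop :=
  IsSCIM σ f ∧ ∃ g : F[X], IsSCIM σ g ∧ g.natDegree = f.natDegree ∧ g ∣ f.comp (X ^ M)

/-- `Ñ_M(q,d)`: the number of `M̃`-power SCIM polynomials of degree `d`. -/
def NtildeM {F : Type*} [Field F] (σ : F →+* F) (M d : ℕ) : ℕ :=
  Nat.card {f : F[X] // IsMtildePowerPoly σ M f ∧ f.natDegree = d}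

/-- An `M`-power polynomial: a monic irreducible `g` such that `g(x^M)` has an irreducible
factor of degree `deg g`. -/
def IsMPowerPoly {F : Type*} [Field F] (M : ℕ) (g : F[X]) : Prop :=
  g.Monic ∧ Irreducible g ∧
    ∃ h : F[X], Irreducible h ∧ h.natDegree = g.natDegree ∧ h ∣ g.comp (X ^ M)

/-- `R̃_M(q,d)`: the number of unordered pairs `{g, g̃}` with `g` a monic irreducible
degree-`d` `M`-power polynomial with `g(0) ≠ 0` (so that `g̃` is defined) and `g ≠ g̃`. -/
def RtildeM {F : Type*} [Field F] (σ : F →+* F) (M d : ℕ) : ℕ :=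
  Nat.card {P : Sym2 F[X] // ∃ g : F[X], IsMPowerPoly M g ∧ g.coeff 0 ≠ 0 ∧
    g.natDegree = d ∧ g ≠ tildePoly σ g ∧ P = s(g, tildePoly σ g)}

/-- The anti-diagonal matrix `Λ_n` with all anti-diagonal entries `1`. -/
def antidiagMat (F : Type*) [Field F] (n : ℕ) : Matrix (Fin n) (Fin n) F :=
  Matrix.of fun i j => if (i : ℕ) + (j : ℕ) + 1 = n then 1 else 0

/-- The unitary group `U(n,q²) = {A ∈ GL(n, F) : A · Λ_n · Āᵗ = Λ_n}`, where `Ā` applies `σ`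
entrywise. -/
def unitaryGrp {F : Type*} [Field F] (σ : F →+* F) (n : ℕ) : Subgroup (GL (Fin n) F) where
  carrier := {A | (A : Matrix (Fin n) (Fin n) F) * antidiagMat F n *
    ((A : Matrix (Fin n) (Fin n) F).map σ)ᵀ = antidiagMat F n}
  one_mem' := by simp
  mul_mem' := by
    intro A B hA hB
    simp only [Set.mem_ofPred_eq] at hA hB ⊢
    calc ((A * B : GL (Fin n) F) : Matrix (Fin n) (Fin n) F) * antidiagMat F n *
          (((A * B : GL (Fin n) F) : Matrix (Fin n) (Fin n) F).map σ)ᵀ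
        = A * (B * antidiagMat F n * ((B : Matrix (Fin n) (Fin n) F).map σ)ᵀ) *
          ((A : Matrix (Fin n) (Fin n) F).map σ)ᵀ := by
          simp only [Units.val_mul, Matrix.map_mul, Matrix.transpose_mul, Matrix.mul_assoc]
      _ = antidiagMat F n := by rw [hB, hA]
  inv_mem' := by
    intro A hA
    simp only [Set.mem_ofPred_eq] at hA ⊢
    have h1 : ((A⁻¹ : GL (Fin n) F) : Matrix (Fin n) (Fin n) F) * A = 1 := by
      rw [← Units.val_mul]; simp
    have h2 : ((A : Matrix (Fin n) (Fin n) F).map σ)ᵀ *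
        (((A⁻¹ : GL (Fin n) F) : Matrix (Fin n) (Fin n) F).map σ)ᵀ = 1 := by
      rw [← Matrix.transpose_mul, ← Matrix.map_mul, h1]; simp
    calc ((A⁻¹ : GL (Fin n) F) : Matrix (Fin n) (Fin n) F) * antidiagMat F n *
          (((A⁻¹ : GL (Fin n) F) : Matrix (Fin n) (Fin n) F).map σ)ᵀ
        = ((A⁻¹ : GL (Fin n) F) : Matrix (Fin n) (Fin n) F) *
            (A * antidiagMat F n * ((A : Matrix (Fin n) (Fin n) F).map σ)ᵀ) *
            (((A⁻¹ : GL (Fin n) F) : Matrix (Fin n) (Fin n) F).map σ)ᵀ := by rw [hA]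
      _ = (((A⁻¹ : GL (Fin n) F) : Matrix (Fin n) (Fin n) F) * A) * antidiagMat F n *
            (((A : Matrix (Fin n) (Fin n) F).map σ)ᵀ *
            (((A⁻¹ : GL (Fin n) F) : Matrix (Fin n) (Fin n) F).map σ)ᵀ) := by
          simp only [Matrix.mul_assoc]
      _ = antidiagMat F n := by rw [h1, h2, Matrix.one_mul, Matrix.mul_one]

/-- A matrix is separable if its characteristic polynomial is squarefree. -/
def IsSeparableMat {F : Type*} [Field F] {n : ℕ} (A : Matrix (Fin n) (Fin n) F) : Prop :=
  Squarefree A.charpoly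

/-- `cS_U^M(n,q)`: the number of conjugacy classes of `U(n,q²)` that consist of separable
matrices which are `M`-th powers in `U(n,q²)`. -/
def numSepPowerClasses {F : Type*} [Field F] (σ : F →+* F) (M n : ℕ) : ℕ :=
  Nat.card {c : ConjClasses (unitaryGrp σ n) // ∀ A ∈ c.carrier,
    IsSeparableMat ((A : GL (Fin n) F) : Matrix (Fin n) (Fin n) F) ∧
      ∃ B : unitaryGrp σ n, B ^ M = A}

/-- The usual topology of the formal power series ring `ℚ[[z]]`: coefficientwise convergence,
each copy of `ℚ` being discrete. -/
instance formalTopology : TopologicalSpace (PowerSeries ℚ) :=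
  @PowerSeries.WithPiTopology.instTopologicalSpace ℚ ⊥

end

/-!
The eigenvalues of a separable unitary matrix `A` form a finite set `S` of nonzero elements of an
algebraic closure of `F`, stable under the map `φ : x ↦ x^(-q)`, whose square is the Frobenius map
`x ↦ x^(q^2)`. Every matrix commuting with `A` is a polynomial in `A`, hence is given by a function
`b` on `S`, and it is unitary exactly when `b (φ x) = φ (b x)` on `S`. So `A` is an `M`-th power
exactly when there is an equivariant `M`-th root function on `S`, that is, when each `x` in `S` has
an `M`-th root whose period under `φ` divides that of `x`. Two invariant Hermitian forms of `A`
differ by a function on `S`, and making them equivalent under the centralizer of `A` amounts to a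
cocycle equation along the orbits of `φ`, which is solvable in the closure. Hence `S` determines the
conjugacy class of `A`; the same equation makes an invariant form Hermitian, so that every stable
`S` occurs.

A class is thus a finite set of orbits of `φ`. An orbit of odd length `d` is the root set of a SCIM
polynomial of degree `d`, and an orbit of length `2 * d` is the union of the root sets of `g` and
`g̃`, with `g ≠ g̃` of degree `d`; so the product counts the finite sets of orbits by total length.
-/

section Orbits

open Function Set

variable {α β : Type*} {f : α → α}

open Classical in
/-- The orbit of a periodic point, as a finset. It is empty for a point that is not periodic. -/
noncomputable def orbitFinset (f : α → α) (x : α) : Finset α :=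
  (periodicOrbit f x).toFinset

theorem mem_orbitFinset {x y : α} (hx : x ∈ periodicPts f) :
    y ∈ orbitFinset f x ↔ ∃ k, f^[k] x = y := by
  classical
  rw [orbitFinset, Cycle.toFinset, Multiset.mem_toFinset, ← mem_periodicOrbit_iff hx]
  rfl

theorem self_mem_orbitFinset {x : α} (hx : x ∈ periodicPts f) : x ∈ orbitFinset f x :=
  (mem_orbitFinset hx).2 ⟨0, rfl⟩

theorem card_orbitFinset (f : α → α) (x : α) :
    (orbitFinset f x).card = minimalPeriod f x := by
  classical
  rw [orbitFinset, Cycle.toFinset, Multiset.toFinset_card_of_nodup, Cycle.card_toMultiset,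
    periodicOrbit_length]
  exact nodup_periodicOrbit

theorem orbitFinset_iterate {x : α} (hx : x ∈ periodicPts f) (k : ℕ) :
    orbitFinset f (f^[k] x) = orbitFinset f x := by
  rw [orbitFinset, orbitFinset, periodicOrbit_apply_iterate_eq hx]

theorem orbitFinset_apply {x : α} (hx : x ∈ periodicPts f) :
    orbitFinset f (f x) = orbitFinset f x :=
  orbitFinset_iterate hx 1

theorem orbitFinset_eq_iff {x y : α} (hx : x ∈ periodicPts f) (hy : y ∈ periodicPts f) :
    orbitFinset f x = orbitFinset f y ↔ ∃ k, f^[k] x = y := by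
  constructor
  · intro h
    rw [← mem_orbitFinset hx, h]
    exact self_mem_orbitFinset hy
  · rintro ⟨k, rfl⟩
    exact (orbitFinset_iterate hx k).symm

theorem exists_orbit_representative (hf : ∀ x, x ∈ periodicPts f) :
    ∃ (rep : α → α) (k : α → ℕ), ∀ x, rep (f x) = rep x ∧ f^[k x] (rep x) = x := by
  let r := Setoid.ker (orbitFinset f)
  have hrep (x : α) : ∃ k, f^[k] (Quotient.mk r x).out = x :=
    (orbitFinset_eq_iff (hf _) (hf x)).1 (Quotient.mk_out (s := r) x)
  choose k hk using hrep
  refine ⟨fun x => (Quotient.mk r x).out, k, fun x => ⟨?_, hk x⟩⟩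
  exact congrArg Quotient.out (Quotient.sound (orbitFinset_apply (hf x)) :
    Quotient.mk r (f x) = Quotient.mk r x)

theorem iterate_eq_iterate_of_isPeriodicPt {T : β → β} {x : α} {y : β} (hx : x ∈ periodicPts f)
    (hy : IsPeriodicPt T (minimalPeriod f x) y) {m n : ℕ} (h : f^[m] x = f^[n] x) :
    T^[m] y = T^[n] y := by
  have hmod : m % minimalPeriod f x = n % minimalPeriod f x := by
    have hpos := minimalPeriod_pos_of_mem_periodicPts hx
    rw [← iterate_eq_iterate_iff_of_lt_minimalPeriod (Nat.mod_lt _ hpos) (Nat.mod_lt _ hpos),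
      iterate_mod_minimalPeriod_eq, iterate_mod_minimalPeriod_eq, h]
  rw [← hy.iterate_mod_apply m, hmod, hy.iterate_mod_apply]

theorem exists_equivariant_section_iff [Nonempty β] (hf : ∀ x, x ∈ periodicPts f) {T : β → β}
    {π : β → α} (hπ : Semiconj π T f) {s : Set α} (hs : MapsTo f s s) :
    (∃ b : α → β, ∀ x ∈ s, π (b x) = x ∧ b (f x) = T (b x)) ↔
      ∀ x ∈ s, ∃ y, π y = x ∧ IsPeriodicPt T (minimalPeriod f x) y := by
  constructor
  · rintro ⟨b, hb⟩ x hx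
    have hiter (k : ℕ) : b (f^[k] x) = T^[k] (b x) := by
      induction k with
      | zero => rfl
      | succ k ih => rw [iterate_succ_apply', (hb _ (hs.iterate k hx)).2, ih, iterate_succ_apply']
    refine ⟨b x, (hb x hx).1, ?_⟩
    rw [IsPeriodicPt, IsFixedPt, ← hiter, iterate_minimalPeriod]
  · intro h
    obtain ⟨rep, k, hrep⟩ := exists_orbit_representative hf
    have hmem (x : α) (hx : x ∈ s) : rep x ∈ s := by
      obtain ⟨j, hj⟩ := (orbitFinset_eq_iff (hf x) (hf (rep x))).1
        ((congrArg _ (hrep x).2).symm.trans (orbitFinset_iterate (hf _) _))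
      exact hj ▸ hs.iterate j hx
    choose! y hy using h
    refine ⟨fun x => T^[k x] (y (rep x)), fun x hx => ⟨?_, ?_⟩⟩
    · rw [(hπ.iterate_right (k x)).eq, (hy _ (hmem x hx)).1, (hrep x).2]
    · have hstep : f^[k (f x)] (rep x) = f^[k x + 1] (rep x) := by
        rw [iterate_succ_apply', (hrep x).2, ← (hrep x).1, (hrep (f x)).2]
      simp only [(hrep x).1, ← iterate_succ_apply' T]
      exact iterate_eq_iterate_of_isPeriodicPt (hf _) (hy _ (hmem x hx)).2 hstep

/-- A twisted cocycle equation along the orbits of `f`. Going once around an orbit of length `m`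
leaves a single equation `y = d * y ^ k ^ m`, which is solvable in a divisible group. -/
theorem exists_apply_eq_mul_zpow {G : Type*} [CommGroup G] (hf : ∀ x, x ∈ periodicPts f)
    (hG : ∀ n : ℤ, n ≠ 0 → Surjective fun z : G => z ^ n) {k : ℤ} (hk : 1 < |k|) (c : α → G) :
    ∃ e : α → G, ∀ x, e (f x) = c x * e x ^ k := by
  cases isEmpty_or_nonempty α
  · exact ⟨isEmptyElim, isEmptyElim⟩
  let T : α × G → α × G := fun z => (f z.1, c z.1 * z.2 ^ k)
  have hT (m : ℕ) (x : α) : ∃ d : G, ∀ y, T^[m] (x, y) = (f^[m] x, d * y ^ k ^ m) := by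
    induction m with
    | zero => exact ⟨1, fun y => by simp⟩
    | succ m ih =>
      obtain ⟨d, hd⟩ := ih
      refine ⟨c (f^[m] x) * d ^ k, fun y => ?_⟩
      rw [iterate_succ_apply', hd]
      simp only [T, iterate_succ_apply', mul_zpow, pow_succ, _root_.zpow_mul, mul_assoc]
  have hlift (x : α) : ∃ y : α × G, y.1 = x ∧ IsPeriodicPt T (minimalPeriod f x) y := by
    obtain ⟨d, hd⟩ := hT (minimalPeriod f x) x
    have hpow : 1 - k ^ minimalPeriod f x ≠ 0 := by
      have hpos := minimalPeriod_pos_of_mem_periodicPts (hf x)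
      have h1 : 1 < |k ^ minimalPeriod f x| := by
        rw [abs_pow]
        exact one_lt_pow₀ hk hpos.ne'
      intro h
      rw [← sub_eq_zero.1 h, abs_one] at h1
      exact h1.false
    obtain ⟨y, hy⟩ := hG _ hpow d
    refine ⟨(x, y), rfl, ?_⟩
    rw [IsPeriodicPt, IsFixedPt, hd, iterate_minimalPeriod, ← hy]
    simp only [← _root_.zpow_add, sub_add_cancel, _root_.zpow_one]
  obtain ⟨b, hb⟩ := (exists_equivariant_section_iff (s := Set.univ) (T := T) (π := Prod.fst)
    (β := α × G) hf (fun _ => rfl) (mapsTo_univ _ _)).2 fun x _ => hlift x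
  refine ⟨fun x => (b x).2, fun x => ?_⟩
  obtain ⟨h1, h2⟩ := hb x trivial
  simp only [h2, T, h1]

end Orbits

section ConjFrobenius

open Function Set

variable {F K : Type*} [Field F] [StarRing F] [Field K] [Algebra F K]

/-- The relation between a finite field `F` of order `q ^ 2` with the involution `star a = a ^ q`
and the power map `τ x = x ^ q` on an algebraic extension `K` of `F`; only what is used below is
recorded. -/
structure IsConjFrobenius (F : Type*) {K : Type*} [Field F] [StarRing F] [Field K] [Algebra F K]
    (τ : K →+* K) (q : ℕ) : Prop where
  two_le : 2 ≤ q
  map_eq_pow (x : K) : τ x = x ^ q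
  map_algebraMap (a : F) : τ (algebraMap F K a) = algebraMap F K (star a)
  exists_algebraMap_eq (x : K) : τ (τ x) = x → ∃ a, algebraMap F K a = x
  mem_periodicPts (x : K) : x ∈ periodicPts τ
  exists_add_star_ne_zero : ∃ a : F, a + star a ≠ 0

/-- The map `x ↦ (τ x)⁻¹`. For `τ x = x ^ q` its square is the Frobenius map of the field with
`q ^ 2` elements, and its orbits play the role of conjugacy classes of eigenvalues of unitary
matrices. -/
def conjInv (τ : K →+* K) : K →*₀ K :=
  invMonoidWithZeroHom.comp τ.toMonoidWithZeroHom

theorem conjInv_apply (τ : K →+* K) (x : K) : conjInv τ x = (τ x)⁻¹ := rfl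

theorem conjInv_conjInv (τ : K →+* K) (x : K) : conjInv τ (conjInv τ x) = τ (τ x) := by
  simp only [conjInv_apply, map_inv₀, inv_inv]

theorem conjInv_injective (τ : K →+* K) : Injective (conjInv τ) :=
  fun _ _ h => τ.injective (inv_injective h)

theorem conjInv_iterate_two_mul (τ : K →+* K) (k : ℕ) : (conjInv τ)^[2 * k] = τ^[2 * k] := by
  rw [iterate_mul, iterate_mul]
  exact congrArg (·^[k]) (funext (conjInv_conjInv τ))

theorem image_eq_of_mapsTo {α : Type*} [DecidableEq α] {f : α → α} (hf : Injective f)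
    {S : Finset α} (hS : MapsTo f S S) : S.image f = S :=
  Finset.eq_of_subset_of_card_le (Finset.image_subset_iff.2 hS)
    (Finset.card_image_of_injective _ hf).ge

theorem exists_mem_apply_eq {α : Type*} {f : α → α} (hf : Injective f) {S : Finset α}
    (hS : MapsTo f S S) {x : α} (hx : x ∈ S) : ∃ y ∈ S, f y = x := by
  classical
  rwa [← image_eq_of_mapsTo hf hS, Finset.mem_image] at hx

theorem mapsTo_comp_self_of_mapsTo_conjInv {τ : K →+* K} {S : Set K}
    (hS : MapsTo (conjInv τ) S S) : MapsTo (τ.comp τ) S S :=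
  fun x hx => conjInv_conjInv τ x ▸ hS (hS hx)

theorem zpow_units_surjective [IsAlgClosed K] {n : ℤ} (hn : n ≠ 0) :
    Surjective fun z : Kˣ => z ^ n := by
  have hnat (m : ℕ) (hm : m ≠ 0) (u : Kˣ) : ∃ z : Kˣ, z ^ m = u := by
    obtain ⟨z, hz⟩ := IsAlgClosed.exists_pow_nat_eq (u : K) (Nat.pos_of_ne_zero hm)
    have hz0 : z ≠ 0 := fun h0 => u.ne_zero (by rw [← hz, h0, zero_pow hm])
    exact ⟨Units.mk0 z hz0, Units.ext (by simpa using hz)⟩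
  intro u
  obtain ⟨m, rfl | rfl⟩ := n.eq_nat_or_neg
  · obtain ⟨z, hz⟩ := hnat m (by simpa using hn) u
    exact ⟨z, by simp only [zpow_natCast, hz]⟩
  · obtain ⟨z, hz⟩ := hnat m (by simpa using hn) u⁻¹
    exact ⟨z, by simp only [_root_.zpow_neg, zpow_natCast, hz, inv_inv]⟩

namespace IsConjFrobenius

variable {τ : K →+* K} {q : ℕ}

theorem mem_periodicPts_conjInv (h : IsConjFrobenius F τ q) (x : K) :
    x ∈ periodicPts (conjInv τ) := by
  obtain ⟨k, hk, hx⟩ := h.mem_periodicPts x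
  refine mk_mem_periodicPts (n := 2 * k) (by omega) ?_
  rw [IsPeriodicPt, conjInv_iterate_two_mul]
  exact hx.const_mul 2

theorem aeval_map_star (h : IsConjFrobenius F τ q) (P : F[X]) (x : K) :
    aeval (τ x) (P.map (starRingEnd F)) = τ (aeval x P) := by
  have hcomp : τ.comp (algebraMap F K) = (algebraMap F K).comp (starRingEnd F) :=
    RingHom.ext h.map_algebraMap
  rw [aeval_def, aeval_def, eval₂_map, hom_eval₂, hcomp]

theorem aeval_comp_self (h : IsConjFrobenius F τ q) (P : F[X]) (x : K) :
    aeval (τ (τ x)) P = τ (τ (aeval x P)) := by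
  rw [← h.aeval_map_star, ← h.aeval_map_star, Polynomial.map_map,
    RingHom.ext (f := (starRingEnd F).comp (starRingEnd F)) (g := .id F) star_star,
    Polynomial.map_id]

theorem exists_map_eq (h : IsConjFrobenius F τ q) {P : K[X]} (hP : P.map (τ.comp τ) = P) :
    ∃ Q : F[X], Q.map (algebraMap F K) = P := by
  rw [← mem_lifts, lifts_iff_coeff_lifts]
  intro n
  refine h.exists_algebraMap_eq _ ?_
  conv_rhs => rw [← hP]
  rw [coeff_map, RingHom.comp_apply]

theorem exists_map_eq_prod (h : IsConjFrobenius F τ q) {S : Finset K}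
    (hS : MapsTo (τ.comp τ) S S) :
    ∃ f : F[X], f.Monic ∧ f.map (algebraMap F K) = ∏ x ∈ S, (X - C x) := by
  classical
  obtain ⟨f, hf⟩ := h.exists_map_eq (P := ∏ x ∈ S, (X - C x)) (by
    conv_rhs => rw [← image_eq_of_mapsTo (τ.comp τ).injective hS]
    rw [Polynomial.map_prod, Finset.prod_image (τ.comp τ).injective.injOn]
    simp only [Polynomial.map_sub, map_X, map_C])
  refine ⟨f, ?_, hf⟩
  rw [← Polynomial.monic_map_iff (f := algebraMap F K), hf]
  exact monic_prod_X_sub_C id S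

theorem exists_aeval_eq (h : IsConjFrobenius F τ q) {S : Finset K}
    (hS : MapsTo (τ.comp τ) S S) {c : K → K} (hc : ∀ x ∈ S, c (τ (τ x)) = τ (τ (c x))) :
    ∃ P : F[X], ∀ x ∈ S, aeval x P = c x := by
  classical
  have hinj : InjOn (id : K → K) S := injective_id.injOn
  let P := Lagrange.interpolate S id c
  have heval (x : K) (hx : x ∈ S) : P.eval x = c x := Lagrange.eval_interpolate_at_node c hinj hx
  have hdeg : P.degree < S.card := Lagrange.degree_interpolate_lt c hinj
  have hfix : P.map (τ.comp τ) = P := by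
    refine Polynomial.eq_of_degrees_lt_of_eval_finset_eq S (by rwa [degree_map]) hdeg ?_
    intro x hx
    obtain ⟨y, hy, rfl⟩ := exists_mem_apply_eq (τ.comp τ).injective hS hx
    rw [heval _ (hS hy), eval_map_apply, heval y hy]
    exact (hc y hy).symm
  obtain ⟨Q, hQ⟩ := h.exists_map_eq hfix
  exact ⟨Q, fun x hx => by rw [← heval x hx, ← hQ, eval_map_algebraMap]⟩

theorem exists_conjInv_equivariant_pow_iff (h : IsConjFrobenius F τ q) {S : Set K}
    (hS : MapsTo (conjInv τ) S S) (M : ℕ) :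
    (∃ b : K → K, ∀ x ∈ S, b x ^ M = x ∧ b (conjInv τ x) = conjInv τ (b x)) ↔
      ∀ x ∈ S, ∃ y, y ^ M = x ∧ IsPeriodicPt (conjInv τ) (minimalPeriod (conjInv τ) x) y :=
  exists_equivariant_section_iff h.mem_periodicPts_conjInv (π := fun y => y ^ M)
    (fun y => (map_pow (conjInv τ) y M).symm) hS

theorem exists_conjInv_eq_mul_zpow [IsAlgClosed K] (h : IsConjFrobenius F τ q) {k : ℤ}
    (hk : 1 < |k|) {S : Set K} {c : K → K} (hc : ∀ x ∈ S, c x ≠ 0) :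
    ∃ e : K → K, (∀ x, e x ≠ 0) ∧ ∀ x ∈ S, e (conjInv τ x) = c x * e x ^ k := by
  classical
  obtain ⟨e, he⟩ := exists_apply_eq_mul_zpow h.mem_periodicPts_conjInv
    (fun n hn => zpow_units_surjective hn) hk
    fun x => if hx : c x = 0 then 1 else Units.mk0 (c x) hx
  refine ⟨fun x => e x, fun x => (e x).ne_zero, fun x hx => ?_⟩
  simp only [he, dif_neg (hc x hx), Units.val_mul, Units.val_mk0, Units.val_zpow_eq_zpow_val]

theorem one_lt_abs (h : IsConjFrobenius F τ q) : 1 < |(q : ℤ)| := by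
  rw [Nat.abs_cast]
  exact_mod_cast h.two_le

theorem exists_conjInv_mul_eq [IsAlgClosed K] (h : IsConjFrobenius F τ q) {S : Set K} {c : K → K}
    (hc : ∀ x ∈ S, c x ≠ 0) :
    ∃ e : K → K, (∀ x, e x ≠ 0) ∧ ∀ x ∈ S, e (conjInv τ x) * τ (e x) = c x := by
  obtain ⟨e, he0, he⟩ := h.exists_conjInv_eq_mul_zpow (k := -q)
    (by rw [abs_neg]; exact h.one_lt_abs) hc
  refine ⟨e, he0, fun x hx => ?_⟩
  rw [he x hx, h.map_eq_pow, _root_.zpow_neg, zpow_natCast,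
    inv_mul_cancel_right₀ (pow_ne_zero _ (he0 x))]

theorem exists_conjInv_eq_mul [IsAlgClosed K] (h : IsConjFrobenius F τ q) {S : Set K} {c : K → K}
    (hc : ∀ x ∈ S, c x ≠ 0) :
    ∃ e : K → K, (∀ x, e x ≠ 0) ∧ ∀ x ∈ S, e (conjInv τ x) = c x * τ (e x) := by
  simpa only [h.map_eq_pow, zpow_natCast] using h.exists_conjInv_eq_mul_zpow h.one_lt_abs hc

theorem exists_mul_star_eq [IsAlgClosed K] (h : IsConjFrobenius F τ q) {a : F} (ha0 : a ≠ 0)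
    (ha : star a = a) : ∃ c, c * star c = a := by
  have hmap := (algebraMap F K).injective
  obtain ⟨z, hz⟩ := IsAlgClosed.exists_pow_nat_eq (algebraMap F K a) q.succ_pos
  have hzτ : z * τ z = algebraMap F K a := by rw [← hz, h.map_eq_pow, pow_succ']
  have hτz : τ z ≠ 0 := right_ne_zero_of_mul (hzτ.trans_ne ((map_ne_zero_iff _ hmap).2 ha0))
  obtain ⟨c, rfl⟩ := h.exists_algebraMap_eq z (mul_left_cancel₀ hτz (by
    rw [← map_mul, hzτ, h.map_algebraMap, ha, mul_comm, hzτ]))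
  exact ⟨c, hmap (by rw [map_mul, ← h.map_algebraMap, hzτ])⟩

theorem exists_aeval_conjInv_mul_eq [IsAlgClosed K] (h : IsConjFrobenius F τ q) {S : Finset K}
    (hS : MapsTo (conjInv τ) S S) {P : F[X]} (hP0 : ∀ x ∈ S, aeval x P ≠ 0)
    (hP : ∀ x ∈ S, aeval (conjInv τ x) P = τ (aeval x P)) :
    ∃ Q : F[X], ∀ x ∈ S, aeval (conjInv τ x) Q * τ (aeval x Q) = aeval (conjInv τ x) P := by
  obtain ⟨e, he0, he⟩ := h.exists_conjInv_mul_eq fun x hx => hP0 (conjInv τ x) (hS hx)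
  obtain ⟨Q, hQ⟩ := h.exists_aeval_eq (mapsTo_comp_self_of_mapsTo_conjInv hS) (c := e)
    fun x hx => by
      refine mul_right_cancel₀ ((map_ne_zero τ).2 (he0 (conjInv τ x))) ?_
      rw [← conjInv_conjInv, he _ (hS hx), hP _ (hS hx), ← he x hx, map_mul, mul_comm]
  exact ⟨Q, fun x hx => by rw [hQ _ (hS hx), hQ x hx, he x hx]⟩

theorem exists_aeval_conjInv_eq_mul [IsAlgClosed K] (h : IsConjFrobenius F τ q) {S : Finset K}
    (hS : MapsTo (conjInv τ) S S) {Q : F[X]}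
    (hQ : ∀ x ∈ S, aeval (conjInv τ x) Q * τ (aeval x Q) = 1) :
    ∃ P : F[X], (∀ x ∈ S, aeval x P ≠ 0) ∧
      ∀ x ∈ S, aeval (conjInv τ x) Q * τ (aeval x P) = aeval (conjInv τ x) P := by
  obtain ⟨e, he0, he⟩ := h.exists_conjInv_eq_mul fun x hx => left_ne_zero_of_mul_eq_one (hQ x hx)
  obtain ⟨P, hP⟩ := h.exists_aeval_eq (mapsTo_comp_self_of_mapsTo_conjInv hS) (c := e)
    fun x hx => by
      rw [← conjInv_conjInv, he _ (hS hx), he x hx, map_mul, ← mul_assoc, hQ _ (hS hx), one_mul]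
  refine ⟨P, fun x hx => by rw [hP x hx]; exact he0 x, fun x hx => ?_⟩
  rw [hP _ (hS hx), hP x hx, he x hx]

end IsConjFrobenius

end ConjFrobenius

section CyclicVector

open Function

variable {F n : Type*} [Field F] [Fintype n] [DecidableEq n]

theorem mul_aeval_eq_aeval_mul {R E : Type*} [CommSemiring R] [Semiring E] [Algebra R E]
    {a b g : E} (h : g * a = b * g) (P : R[X]) : g * aeval a P = aeval b P * g := by
  have hpow (k : ℕ) : g * a ^ k = b ^ k * g := (SemiconjBy.pow_right h k).eq
  induction P using Polynomial.induction_on' with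
  | add P Q hP hQ => rw [map_add, map_add, mul_add, add_mul, hP, hQ]
  | monomial k c =>
    rw [aeval_monomial, aeval_monomial, mul_assoc, ← hpow, Algebra.left_comm]

theorem commute_aeval {R E : Type*} [CommSemiring R] [Semiring E] [Algebra R E] (a : E)
    (P : R[X]) : Commute a (aeval a P) := by
  simpa only [aeval_X] using (Commute.all X P).map (aeval a)

/-- The linear map `P ↦ P(A) v`; it is surjective exactly when `v` is a cyclic vector of `A`. -/
noncomputable def aevalMulVec (A : Matrix n n F) (v : n → F) : F[X] →ₗ[F] n → F :=
  LinearMap.applyₗ v ∘ₗ Matrix.toLin'.toLinearMap ∘ₗ (aeval A).toLinearMap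

theorem aevalMulVec_apply (A : Matrix n n F) (v : n → F) (P : F[X]) :
    aevalMulVec A v P = aeval A P *ᵥ v := rfl

theorem aevalMulVec_mul (A : Matrix n n F) (v : n → F) (P Q : F[X]) :
    aevalMulVec A v (P * Q) = aeval A P *ᵥ aevalMulVec A v Q := by
  rw [aevalMulVec_apply, aevalMulVec_apply, map_mul, Matrix.mulVec_mulVec]

theorem aevalMulVec_X_mul (A : Matrix n n F) (v : n → F) (P : F[X]) :
    aevalMulVec A v (X * P) = A *ᵥ aevalMulVec A v P := by
  rw [aevalMulVec_mul, aeval_X]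

theorem exists_aevalMulVec_eq_zero_iff (A : Matrix n n F) :
    ∃ v, ∀ P, aevalMulVec A v P = 0 ↔ minpoly F A ∣ P := by
  obtain ⟨v, hv⟩ := Module.exists_ker_toSpanSingleton_eq_annihilator F[X]
    (Module.AEval' (Matrix.toLin' A))
  obtain ⟨v, rfl⟩ := (Module.AEval'.of (Matrix.toLin' A)).surjective v
  rw [← span_minpoly_eq_annihilator, Matrix.minpoly_toLin'] at hv
  refine ⟨v, fun P => ?_⟩
  have haeval : aeval (Matrix.toLin' A) P = Matrix.toLin' (aeval A P) :=
    aeval_algHom_apply (Matrix.toLinAlgEquiv' (R := F) (n := n)) A P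
  rw [← Ideal.mem_span_singleton, ← hv, LinearMap.mem_ker, LinearMap.toSpanSingleton_apply,
    ← Module.AEval.of_aeval_smul, LinearEquiv.map_eq_zero_iff, Module.End.smul_def, haeval,
    Matrix.toLin'_apply, aevalMulVec_apply]

theorem exists_aevalMulVec_surjective {A : Matrix n n F} (hA : minpoly F A = A.charpoly) :
    ∃ v, Surjective (aevalMulVec A v) ∧ ∀ P, aevalMulVec A v P = 0 ↔ A.charpoly ∣ P := by
  obtain ⟨v, hv⟩ := exists_aevalMulVec_eq_zero_iff A
  rw [hA] at hv
  refine ⟨v, ?_, hv⟩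
  have hinj : Injective (aevalMulVec A v ∘ₗ (degreeLT F (Fintype.card n)).subtype) := by
    rw [← LinearMap.ker_eq_bot, LinearMap.ker_eq_bot']
    rintro ⟨P, hP⟩ h0
    refine Subtype.ext (eq_zero_of_dvd_of_degree_lt ((hv P).1 h0) ?_)
    rwa [Matrix.charpoly_degree_eq_dim, ← mem_degreeLT]
  have hdim : Module.finrank F (degreeLT F (Fintype.card n)) = Module.finrank F (n → F) := by
    rw [(degreeLTEquiv F _).finrank_eq, Module.finrank_fin_fun, Module.finrank_pi]
  have hfin : FiniteDimensional F (degreeLT F (Fintype.card n)) :=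
    (degreeLTEquiv F _).symm.finiteDimensional
  exact Surjective.of_comp (g := (degreeLT F (Fintype.card n)).subtype)
    ((LinearMap.injective_iff_surjective_of_finrank_eq_finrank hdim).1 hinj)

theorem exists_aeval_eq_of_commute {A Z : Matrix n n F} (hA : minpoly F A = A.charpoly)
    (hZ : Commute A Z) : ∃ P : F[X], aeval A P = Z := by
  obtain ⟨v, hsurj, -⟩ := exists_aevalMulVec_surjective hA
  obtain ⟨P, hP⟩ := hsurj (Z *ᵥ v)
  refine ⟨P, Matrix.ext_of_mulVec_single fun i => ?_⟩
  obtain ⟨R, hR⟩ := hsurj (Pi.single i 1)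
  rw [← hR, ← aevalMulVec_mul, mul_comm, aevalMulVec_mul, hP, Matrix.mulVec_mulVec,
    ← mul_aeval_eq_aeval_mul hZ.symm.eq, aevalMulVec_apply, Matrix.mulVec_mulVec]

theorem exists_isUnit_mul_eq_mul_of_charpoly_eq {A B : Matrix n n F}
    (hA : minpoly F A = A.charpoly) (hB : minpoly F B = B.charpoly)
    (hAB : A.charpoly = B.charpoly) : ∃ G : Matrix n n F, IsUnit G ∧ G * A = B * G := by
  obtain ⟨v, hv, hv0⟩ := exists_aevalMulVec_surjective hA
  obtain ⟨w, hw, hw0⟩ := exists_aevalMulVec_surjective hB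
  have hker : (aevalMulVec A v).ker = (aevalMulVec B w).ker := by
    ext P
    rw [LinearMap.mem_ker, LinearMap.mem_ker, hv0, hw0, hAB]
  let e : (n → F) ≃ₗ[F] n → F := ((aevalMulVec A v).quotKerEquivOfSurjective hv).symm ≪≫ₗ
    Submodule.quotEquivOfEq _ _ hker ≪≫ₗ (aevalMulVec B w).quotKerEquivOfSurjective hw
  have he (P : F[X]) : e (aevalMulVec A v P) = aevalMulVec B w P := by
    have hsymm : ((aevalMulVec A v).quotKerEquivOfSurjective hv).symm (aevalMulVec A v P) =
        Submodule.Quotient.mk P :=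
      (LinearEquiv.symm_apply_eq _).2 (LinearMap.quotKerEquivOfSurjective_apply_mk _ _ _).symm
    simp only [e, LinearEquiv.trans_apply, hsymm, Submodule.quotEquivOfEq_mk,
      LinearMap.quotKerEquivOfSurjective_apply_mk]
  refine ⟨LinearMap.toMatrix' e.toLinearMap, ?_, Matrix.ext_of_mulVec_single fun i => ?_⟩
  · exact LinearMap.isUnit_toMatrix'_iff.2 ((Module.End.isUnit_iff _).2 e.bijective)
  · obtain ⟨R, hR⟩ := hv (Pi.single i 1)
    simp only [← Matrix.mulVec_mulVec, LinearMap.toMatrix'_mulVec, LinearEquiv.coe_coe, ← hR,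
      ← aevalMulVec_X_mul, he]

end CyclicVector

section Spectrum

variable {F K n : Type*} [Field F] [Field K] [Algebra F K] [Fintype n] [DecidableEq n]

/-- The eigenvalues of `A` in the extension field `K` are the elements of `S`, each with
multiplicity one. -/
def HasSimpleSpectrum (A : Matrix n n F) (S : Finset K) : Prop :=
  A.charpoly.map (algebraMap F K) = ∏ x ∈ S, (X - C x)

theorem exists_charpoly_eq {f : F[X]} (hf : f.Monic) (hdeg : f.natDegree = Fintype.card n) :
    ∃ A : Matrix n n F, A.charpoly = f := by
  let b := AdjoinRoot.powerBasis' hf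
  have hdim : b.dim = Fintype.card n := hdeg
  refine ⟨Matrix.reindex (Fintype.equivOfCardEq (by rw [Fintype.card_fin, hdim]))
    (Fintype.equivOfCardEq (by rw [Fintype.card_fin, hdim])) (Algebra.leftMulMatrix b.basis b.gen),
    ?_⟩
  rw [Matrix.charpoly_reindex, charpoly_leftMulMatrix, AdjoinRoot.powerBasis'_gen,
    AdjoinRoot.minpoly_root hf.ne_zero, hf.leadingCoeff, inv_one, C_1, mul_one]

theorem exists_hasSimpleSpectrum [PerfectField F] [IsAlgClosed K] {A : Matrix n n F}
    (hA : Squarefree A.charpoly) : ∃ S : Finset K, HasSimpleSpectrum A S := by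
  classical
  have hsep : (A.charpoly.map (algebraMap F K)).Separable :=
    (PerfectField.separable_iff_squarefree.2 hA).map
  refine ⟨(A.charpoly.map (algebraMap F K)).roots.toFinset, ?_⟩
  rw [HasSimpleSpectrum, Finset.prod, Multiset.toFinset_val,
    Multiset.dedup_eq_self.2 (nodup_roots hsep)]
  exact (IsAlgClosed.splits _).eq_prod_roots_of_monic (A.charpoly_monic.map _)

theorem aeval_eq_zero_of_aeval_charpoly_eq_zero {A : Matrix n n F} {x : K}
    (hx : aeval x A.charpoly = 0) {P : F[X]} (hP : aeval A P = 0) : aeval x P = 0 := by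
  cases isEmpty_or_nonempty n
  · rw [Matrix.charpoly, Matrix.det_isEmpty, map_one] at hx
    exact absurd hx one_ne_zero
  let A' : Matrix n n K := (Algebra.ofId F K).mapMatrix A
  have hzero : aeval A' (P.map (algebraMap F K)) = 0 := by
    rw [aeval_map_algebraMap, aeval_algHom_apply, hP, map_zero]
  have hspec : x ∈ spectrum K A' := by
    rw [Matrix.mem_spectrum_iff_isRoot_charpoly, IsRoot.def]
    exact (congrArg (eval x) (Matrix.charpoly_map A (algebraMap F K))).trans
      ((eval_map_algebraMap _ x).trans hx)
  have hmem : eval x (P.map (algebraMap F K)) ∈ spectrum K (aeval A' (P.map (algebraMap F K))) :=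
    spectrum.subset_polynomial_aeval A' _ ⟨x, hspec, rfl⟩
  rwa [hzero, spectrum.zero_eq, Set.mem_singleton_iff, eval_map_algebraMap] at hmem

theorem prod_X_sub_C_dvd_map {P : F[X]} {S : Finset K} (hP : ∀ x ∈ S, aeval x P = 0) :
    ∏ x ∈ S, (X - C x) ∣ P.map (algebraMap F K) := by
  refine Finset.prod_dvd_of_coprime
    ((pairwise_coprime_X_sub_C (s := id) Function.injective_id).set_pairwise _) fun x hx => ?_
  rw [dvd_iff_isRoot, IsRoot.def, eval_map_algebraMap, hP x hx]

namespace HasSimpleSpectrum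

variable {A B : Matrix n n F} {S T : Finset K}

theorem card_eq (hA : HasSimpleSpectrum A S) : S.card = Fintype.card n := by
  rw [← natDegree_finsetProd_X_sub_C_eq_card S fun x => x, ← hA, natDegree_map,
    Matrix.charpoly_natDegree_eq_dim]

theorem unique (hS : HasSimpleSpectrum A S) (hT : HasSimpleSpectrum A T) : S = T := by
  have h := congrArg roots (hS.symm.trans hT)
  rwa [roots_prod_X_sub_C, roots_prod_X_sub_C, Finset.val_inj] at h

theorem charpoly_eq (hA : HasSimpleSpectrum A S) (hB : HasSimpleSpectrum B S) :
    A.charpoly = B.charpoly :=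
  Polynomial.map_injective _ (algebraMap F K).injective (hA.trans hB.symm)

theorem conj (hA : HasSimpleSpectrum A S) (G : (Matrix n n F)ˣ) :
    HasSimpleSpectrum (G.val * A * G⁻¹.val) S := by
  rwa [HasSimpleSpectrum, Matrix.coe_units_inv, Matrix.charpoly_units_conj]

theorem squarefree_charpoly (hA : HasSimpleSpectrum A S) : Squarefree A.charpoly := by
  refine Separable.squarefree ((separable_map (algebraMap F K)).1 ?_)
  rw [hA]
  exact separable_prod_X_sub_C_iff'.2 fun _ _ _ _ h => h

theorem aeval_charpoly_eq_zero_iff (hA : HasSimpleSpectrum A S) {x : K} :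
    aeval x A.charpoly = 0 ↔ x ∈ S := by
  rw [← eval_map_algebraMap, hA, eval_prod, Finset.prod_eq_zero_iff]
  simp only [eval_sub, eval_X, eval_C, sub_eq_zero, exists_eq_right']

theorem charpoly_dvd (hA : HasSimpleSpectrum A S) {P : F[X]} (hP : ∀ x ∈ S, aeval x P = 0) :
    A.charpoly ∣ P := by
  rw [← map_dvd_map' (algebraMap F K), hA]
  exact prod_X_sub_C_dvd_map hP

theorem aeval_eq_zero_iff (hA : HasSimpleSpectrum A S) {P : F[X]} :
    aeval A P = 0 ↔ ∀ x ∈ S, aeval x P = 0 := by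
  constructor
  · exact fun h x hx =>
      aeval_eq_zero_of_aeval_charpoly_eq_zero (hA.aeval_charpoly_eq_zero_iff.2 hx) h
  · intro h
    obtain ⟨Q, hQ⟩ := hA.charpoly_dvd h
    rw [hQ, map_mul, Matrix.aeval_self_charpoly, zero_mul]

theorem aeval_eq_iff (hA : HasSimpleSpectrum A S) {P Q : F[X]} :
    aeval A P = aeval A Q ↔ ∀ x ∈ S, aeval x P = aeval x Q := by
  simpa only [map_sub, sub_eq_zero] using hA.aeval_eq_zero_iff (P := P - Q)

theorem minpoly_eq_charpoly (hA : HasSimpleSpectrum A S) : minpoly F A = A.charpoly :=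
  eq_of_monic_of_associated (minpoly.monic A.isIntegral) A.charpoly_monic
    (associated_of_dvd_dvd A.minpoly_dvd_charpoly
      (hA.charpoly_dvd (hA.aeval_eq_zero_iff.1 (minpoly.aeval F A))))

theorem exists_aeval_eq (hA : HasSimpleSpectrum A S) {Z : Matrix n n F} (hZ : Commute A Z) :
    ∃ P : F[X], aeval A P = Z :=
  exists_aeval_eq_of_commute hA.minpoly_eq_charpoly hZ

theorem exists_isUnit_mul_eq_mul (hA : HasSimpleSpectrum A S) (hB : HasSimpleSpectrum B S) :
    ∃ G : Matrix n n F, IsUnit G ∧ G * A = B * G :=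
  exists_isUnit_mul_eq_mul_of_charpoly_eq hA.minpoly_eq_charpoly hB.minpoly_eq_charpoly
    (hA.charpoly_eq hB)

theorem isUnit_aeval (hA : HasSimpleSpectrum A S) {P : F[X]} (hP : ∀ x ∈ S, aeval x P ≠ 0) :
    IsUnit (aeval A P) := by
  have hcoprime : IsCoprime P A.charpoly := by
    rw [← isCoprime_map (algebraMap F K), hA]
    refine IsCoprime.prod_right fun x hx => ((irreducible_X_sub_C x).coprime_iff_not_dvd.2 ?_).symm
    rw [dvd_iff_isRoot, IsRoot.def, eval_map_algebraMap]
    exact hP x hx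
  obtain ⟨U, V, hUV⟩ := hcoprime
  refine IsUnit.of_mul_eq_one_right (aeval A U) ?_
  have h := congrArg (aeval A) hUV
  rwa [map_add, map_mul, map_mul, Matrix.aeval_self_charpoly, mul_zero, add_zero, map_one] at h

theorem aeval_ne_zero (hA : HasSimpleSpectrum A S) {P : F[X]} (hP : IsUnit (aeval A P)) {x : K}
    (hx : x ∈ S) : aeval x P ≠ 0 := by
  obtain ⟨u, hu⟩ := hP
  have hcomm : Commute A u := by
    rw [hu]
    exact commute_aeval A P
  obtain ⟨Q, hQ⟩ := hA.exists_aeval_eq hcomm.units_inv_right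
  have h : aeval A (P * Q) = aeval A (1 : F[X]) := by
    rw [map_mul, hQ, ← hu, map_one, Units.mul_inv]
  have hx1 := hA.aeval_eq_iff.1 h x hx
  rw [map_mul, map_one] at hx1
  exact left_ne_zero_of_mul_eq_one hx1

theorem ne_zero (hA : HasSimpleSpectrum A S) (hAu : IsUnit A) {x : K} (hx : x ∈ S) : x ≠ 0 := by
  rw [← aeval_X (R := F) x]
  exact hA.aeval_ne_zero (by rwa [aeval_X]) hx

theorem of_aeval_charpoly_eq_zero (hcard : S.card = Fintype.card n)
    (hA : ∀ x ∈ S, aeval x A.charpoly = 0) : HasSimpleSpectrum A S := by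
  refine (eq_of_dvd_of_natDegree_le_of_leadingCoeff (prod_X_sub_C_dvd_map hA) ?_ ?_).symm
  · rw [natDegree_map, A.charpoly_natDegree_eq_dim,
      natDegree_finsetProd_X_sub_C_eq_card S fun x => x, hcard]
  · rw [(monic_prod_X_sub_C (fun x => x) S).leadingCoeff, (A.charpoly_monic.map _).leadingCoeff]

theorem exists_aeval_eq_inv (hA : HasSimpleSpectrum A S) (hAu : IsUnit A) :
    ∃ R : F[X], aeval A R = A⁻¹ ∧ ∀ x ∈ S, aeval x R = x⁻¹ := by
  have hdet := (Matrix.isUnit_iff_isUnit_det A).1 hAu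
  obtain ⟨R, hR⟩ := hA.exists_aeval_eq (Z := A⁻¹)
    ((A.mul_nonsing_inv hdet).trans (A.nonsing_inv_mul hdet).symm)
  refine ⟨R, hR, fun x hx => ?_⟩
  have h : aeval A (X * R) = aeval A (1 : F[X]) := by
    rw [map_mul, aeval_X, hR, A.mul_nonsing_inv hdet, map_one]
  have hx1 := hA.aeval_eq_iff.1 h x hx
  rw [map_mul, aeval_X, map_one] at hx1
  exact eq_inv_of_mul_eq_one_right hx1

end HasSimpleSpectrum

end Spectrum

section Isometry

open Set

variable {F K n : Type*} [Field F] [StarRing F] [Field K] [Algebra F K] [Fintype n]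

/-- `A` preserves the sesquilinear form with Gram matrix `H`; the form need not be Hermitian. -/
def IsIsometry (H A : Matrix n n F) : Prop :=
  A * H * Aᴴ = H

theorem IsIsometry.conjTranspose {H A : Matrix n n F} (hAH : IsIsometry H A) : IsIsometry Hᴴ A := by
  have h := congrArg Matrix.conjTranspose hAH
  rwa [Matrix.conjTranspose_mul, Matrix.conjTranspose_mul, Matrix.conjTranspose_conjTranspose,
    ← mul_assoc] at h

variable [DecidableEq n]

theorem conjTranspose_aeval (A : Matrix n n F) (P : F[X]) :
    (aeval A P)ᴴ = aeval Aᴴ (P.map (starRingEnd F)) := by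
  induction P using Polynomial.induction_on' with
  | add P Q hP hQ => simp only [map_add, Polynomial.map_add, Matrix.conjTranspose_add, hP, hQ]
  | monomial k a =>
    rw [map_monomial, aeval_monomial, aeval_monomial, ← Algebra.smul_def, ← Algebra.smul_def,
      Matrix.conjTranspose_smul, Matrix.conjTranspose_pow, starRingEnd_apply]

theorem HasSimpleSpectrum.aeval_conjInv_eq_zero {τ : K →+* K} {q : ℕ} (h : IsConjFrobenius F τ q)
    {A : Matrix n n F} {S : Finset K} (hA : HasSimpleSpectrum A S) (hAu : IsUnit A) {P : F[X]}
    (hP : aeval A⁻¹ᴴ P = 0) {x : K} (hx : x ∈ S) : aeval (conjInv τ x) P = 0 := by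
  obtain ⟨R, hRA, hR⟩ := hA.exists_aeval_eq_inv hAu
  have hzero : aeval A ((P.map (starRingEnd F)).comp R) = 0 := by
    rw [aeval_comp, hRA, ← Matrix.conjTranspose_conjTranspose A⁻¹, ← conjTranspose_aeval, hP,
      Matrix.conjTranspose_zero]
  have hx0 := hA.aeval_eq_zero_iff.1 hzero x hx
  rw [aeval_comp, hR x hx] at hx0
  rw [conjInv_apply, ← map_inv₀, ← map_eq_zero τ, ← h.aeval_map_star, h.aeval_comp_self, hx0,
    map_zero, map_zero]

namespace IsIsometry

variable {H H₁ H₂ A : Matrix n n F} {S : Finset K}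

theorem isUnit (hAH : IsIsometry H A) (hH : IsUnit H) : IsUnit A := by
  obtain ⟨u, rfl⟩ := hH
  refine IsUnit.of_mul_eq_one (u.val * Aᴴ * u⁻¹.val) ?_
  rw [← mul_assoc, ← mul_assoc, hAH, Units.mul_inv]

theorem semiconjBy (hAH : IsIsometry H A) (hA : IsUnit A) : SemiconjBy H A⁻¹ᴴ A := by
  have hinv : Aᴴ * A⁻¹ᴴ = 1 := by
    rw [← Matrix.conjTranspose_mul,
      Matrix.nonsing_inv_mul _ ((Matrix.isUnit_iff_isUnit_det A).1 hA), Matrix.conjTranspose_one]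
  calc H * A⁻¹ᴴ = A * H * Aᴴ * A⁻¹ᴴ := by rw [hAH]
    _ = A * H := by rw [mul_assoc, hinv, mul_one]

theorem exists_aeval_mul_eq (h₁ : IsIsometry H₁ A) (h₂ : IsIsometry H₂ A) (hH₁ : IsUnit H₁)
    (hA : HasSimpleSpectrum A S) : ∃ P : F[X], aeval A P * H₁ = H₂ := by
  obtain ⟨u, rfl⟩ := hH₁
  have hAu := h₁.isUnit u.isUnit
  obtain ⟨P, hP⟩ := hA.exists_aeval_eq (Z := H₂ * u⁻¹.val)
    ((h₂.semiconjBy hAu).mul_left (h₁.semiconjBy hAu).units_inv_symm_left).eq.symm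
  exact ⟨P, by rw [hP, mul_assoc, Units.inv_mul, mul_one]⟩

variable {τ : K →+* K} {q : ℕ}

theorem mapsTo_conjInv (hAH : IsIsometry H A) (h : IsConjFrobenius F τ q) (hH : IsUnit H)
    (hA : HasSimpleSpectrum A S) : MapsTo (conjInv τ) S S := by
  intro x hx
  have hAu := hAH.isUnit hH
  refine hA.aeval_charpoly_eq_zero_iff.1 (hA.aeval_conjInv_eq_zero h hAu ?_ hx)
  refine hH.mul_left_cancel ?_
  rw [mul_aeval_eq_aeval_mul (hAH.semiconjBy hAu).eq, Matrix.aeval_self_charpoly, zero_mul,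
    mul_zero]

theorem exists_mul_conjTranspose_aeval_eq (hAH : IsIsometry H A) (h : IsConjFrobenius F τ q)
    (hH : IsUnit H) (hA : HasSimpleSpectrum A S) (P : F[X]) :
    ∃ Q : F[X], H * (aeval A P)ᴴ = aeval A Q * H ∧
      ∀ x ∈ S, aeval (conjInv τ x) Q = τ (aeval x P) := by
  have hAu := hAH.isUnit hH
  obtain ⟨R, hRA, hR⟩ := hA.exists_aeval_eq_inv hAu
  have hsemi : H * Aᴴ = A⁻¹ * H := by
    conv_rhs => rw [← hAH, mul_assoc A,
      Matrix.nonsing_inv_mul_cancel_left _ _ ((Matrix.isUnit_iff_isUnit_det A).1 hAu)]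
  refine ⟨(P.map (starRingEnd F)).comp R, ?_, fun x hx => ?_⟩
  · rw [conjTranspose_aeval, mul_aeval_eq_aeval_mul hsemi, aeval_comp, hRA]
  · rw [aeval_comp, hR _ (hAH.mapsTo_conjInv h hH hA hx), conjInv_apply, inv_inv,
      h.aeval_map_star]

theorem aeval_mul_mul_conjTranspose_aeval_eq_iff (hAH : IsIsometry H A)
    (h : IsConjFrobenius F τ q) (hH : IsUnit H) (hA : HasSimpleSpectrum A S) {P Q R : F[X]} :
    aeval A P * H * (aeval A Q)ᴴ = aeval A R * H ↔
      ∀ x ∈ S, aeval (conjInv τ x) P * τ (aeval x Q) = aeval (conjInv τ x) R := by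
  have hS := hAH.mapsTo_conjInv h hH hA
  obtain ⟨Q', hQ', hQ'x⟩ := hAH.exists_mul_conjTranspose_aeval_eq h hH hA Q
  rw [mul_assoc, hQ', ← mul_assoc, ← map_mul, hH.mul_left_inj, hA.aeval_eq_iff]
  constructor
  · intro hPR x hx
    rw [← hQ'x x hx, ← map_mul, hPR _ (hS hx)]
  · intro hPR x hx
    obtain ⟨y, hy, rfl⟩ := exists_mem_apply_eq (conjInv_injective τ) hS hx
    rw [map_mul, hQ'x y hy, hPR y hy]

theorem aeval_iff (hAH : IsIsometry H A) (h : IsConjFrobenius F τ q) (hH : IsUnit H)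
    (hA : HasSimpleSpectrum A S) {P : F[X]} :
    IsIsometry H (aeval A P) ↔
      ∀ x ∈ S, aeval x P ≠ 0 ∧ aeval (conjInv τ x) P = conjInv τ (aeval x P) := by
  have hiff := hAH.aeval_mul_mul_conjTranspose_aeval_eq_iff h hH hA (P := P) (Q := P) (R := 1)
  simp only [map_one, one_mul] at hiff
  refine hiff.trans (forall₂_congr fun x _ => ⟨fun hx => ?_, fun ⟨hx0, hx⟩ => ?_⟩)
  · exact ⟨(map_ne_zero τ).1 (right_ne_zero_of_mul_eq_one hx), eq_inv_of_mul_eq_one_left hx⟩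
  · rw [hx, conjInv_apply, inv_mul_cancel₀ ((map_ne_zero τ).2 hx0)]

theorem exists_pow_eq_iff (hAH : IsIsometry H A) (h : IsConjFrobenius F τ q) (hH : IsUnit H)
    (hA : HasSimpleSpectrum A S) {M : ℕ} (hM : M ≠ 0) :
    (∃ B, IsIsometry H B ∧ B ^ M = A) ↔
      ∃ b : K → K, ∀ x ∈ S, b x ^ M = x ∧ b (conjInv τ x) = conjInv τ (b x) := by
  have hS := hAH.mapsTo_conjInv h hH hA
  have hpow (P : F[X]) : aeval A P ^ M = A ↔ ∀ x ∈ S, aeval x P ^ M = x := by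
    simpa only [map_pow, aeval_X] using hA.aeval_eq_iff (P := P ^ M) (Q := X)
  constructor
  · rintro ⟨B, hB, hBA⟩
    obtain ⟨P, rfl⟩ := hA.exists_aeval_eq (hBA ▸ (Commute.refl B).pow_left M)
    exact ⟨fun x => aeval x P,
      fun x hx => ⟨(hpow P).1 hBA x hx, ((hAH.aeval_iff h hH hA).1 hB x hx).2⟩⟩
  · rintro ⟨b, hb⟩
    obtain ⟨P, hP⟩ := h.exists_aeval_eq (mapsTo_comp_self_of_mapsTo_conjInv hS) (c := b)
      fun x hx => by
        rw [← conjInv_conjInv, (hb _ (hS hx)).2, (hb x hx).2, conjInv_conjInv]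
    refine ⟨aeval A P, (hAH.aeval_iff h hH hA).2 fun x hx => ⟨?_, ?_⟩, (hpow P).2 fun x hx => ?_⟩
    · rw [hP x hx, ← pow_ne_zero_iff hM, (hb x hx).1]
      exact hA.ne_zero (hAH.isUnit hH) hx
    · rw [hP _ (hS hx), hP x hx, (hb x hx).2]
    · rw [hP x hx, (hb x hx).1]

theorem exists_commute_mul_mul_conjTranspose_eq [IsAlgClosed K] (h₁ : IsIsometry H₁ A)
    (h₂ : IsIsometry H₂ A) (h : IsConjFrobenius F τ q) (hH₁ : IsUnit H₁) (hH₂ : IsUnit H₂)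
    (hH₁' : H₁.IsHermitian) (hH₂' : H₂.IsHermitian) (hA : HasSimpleSpectrum A S) :
    ∃ U, Commute A U ∧ U * H₁ * Uᴴ = H₂ := by
  have hS := h₁.mapsTo_conjInv h hH₁ hA
  obtain ⟨P, rfl⟩ := h₁.exists_aeval_mul_eq h₂ hH₁ hA
  have hP0 (x : K) (hx : x ∈ S) : aeval x P ≠ 0 := by
    refine hA.aeval_ne_zero ?_ hx
    obtain ⟨u, rfl⟩ := hH₁
    exact (Units.isUnit_mul_units _ u).1 hH₂
  have hP (x : K) (hx : x ∈ S) : aeval (conjInv τ x) P = τ (aeval x P) := by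
    have := (h₁.aeval_mul_mul_conjTranspose_aeval_eq_iff h hH₁ hA (P := 1) (Q := P) (R := P)).1
      (by rw [map_one, one_mul, ← hH₂'.eq, Matrix.conjTranspose_mul, hH₁'.eq]) x hx
    rwa [map_one, one_mul, eq_comm] at this
  obtain ⟨Q, hQ⟩ := h.exists_aeval_conjInv_mul_eq hS hP0 hP
  exact ⟨aeval A Q, commute_aeval A Q,
    (h₁.aeval_mul_mul_conjTranspose_aeval_eq_iff h hH₁ hA).2 hQ⟩

theorem exists_isHermitian [IsAlgClosed K] (hAH : IsIsometry H A) (h : IsConjFrobenius F τ q)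
    (hH : IsUnit H) (hA : HasSimpleSpectrum A S) :
    ∃ H' : Matrix n n F, IsUnit H' ∧ H'.IsHermitian ∧ IsIsometry H' A := by
  have hS := hAH.mapsTo_conjInv h hH hA
  have hiff {P Q R : F[X]} := hAH.aeval_mul_mul_conjTranspose_aeval_eq_iff h hH hA
    (P := P) (Q := Q) (R := R)
  obtain ⟨Q, hQ⟩ := hAH.exists_aeval_mul_eq hAH.conjTranspose hH hA
  have hQ1 : aeval A Q * H * (aeval A Q)ᴴ = aeval A (1 : F[X]) * H := by
    rw [hQ, ← Matrix.conjTranspose_mul, hQ, Matrix.conjTranspose_conjTranspose, map_one, one_mul]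
  obtain ⟨P, hP0, hP⟩ := h.exists_aeval_conjInv_eq_mul hS (Q := Q) (by
    simpa only [map_one] using hiff.1 hQ1)
  have hPH : aeval A Q * H * (aeval A P)ᴴ = aeval A P * H := hiff.2 hP
  refine ⟨aeval A P * H, (hA.isUnit_aeval hP0).mul hH, ?_, ?_⟩
  · rw [Matrix.IsHermitian, Matrix.conjTranspose_mul, ← hQ, hPH]
  · rw [IsIsometry, ← mul_assoc, (commute_aeval A P).eq, mul_assoc, mul_assoc, ← mul_assoc A,
      hAH]

end IsIsometry

end Isometry

section HermitianForm

theorem one_ne_mul_of_card_lt {F m n : Type*} [Field F] [Fintype m] [Fintype n] [DecidableEq n]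
    (hcard : Fintype.card m < Fintype.card n) (A : Matrix n m F) (B : Matrix m n F) :
    (1 : Matrix n n F) ≠ A * B := by
  intro h
  have hrank := Matrix.rank_one (R := F) (n := n)
  rw [h] at hrank
  exact hcard.not_ge (hrank ▸ (Matrix.rank_mul_le_right A B).trans B.rank_le_card_height)

variable {F l m n : Type*} [Field F] [StarRing F] [Fintype n] {H : Matrix n n F}

theorem conjTranspose_mul_mul_conjTranspose (hH : H.IsHermitian) (V : Matrix m n F)
    (U : Matrix l n F) : (V * H * Uᴴ)ᴴ = U * H * Vᴴ := by
  rw [Matrix.conjTranspose_mul, Matrix.conjTranspose_mul, hH.eq,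
    Matrix.conjTranspose_conjTranspose, ← Matrix.mul_assoc]

/-- By polarization, if the form vanished on all rows, then `x + star x = 0` for all its values
`x`, which sweep out `F` when `H ≠ 0`. -/
theorem exists_row_mul_mul_conjTranspose_ne_zero (ha : ∃ a : F, a + star a ≠ 0)
    (hH : H.IsHermitian) (hH0 : H ≠ 0) : ∃ W : Matrix Unit n F, W * H * Wᴴ ≠ 0 := by
  classical
  obtain ⟨a, ha⟩ := ha
  by_contra! hW
  refine hH0 (Matrix.ext fun i j => ?_)
  by_contra hij
  let U : Matrix Unit n F := Matrix.single () i (a / H i j)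
  let V : Matrix Unit n F := Matrix.single () j 1
  have hUV : U * H * Vᴴ = Matrix.single () () a := by
    simp only [U, V, Matrix.conjTranspose_single, star_one, Matrix.single_mul_mul_single, mul_one,
      div_mul_cancel₀ a hij]
  have hVU : V * H * Uᴴ = Matrix.single () () (star a) := by
    rw [← Matrix.conjTranspose_single, ← hUV, conjTranspose_mul_mul_conjTranspose hH]
  have hsum := hW (U + V)
  rw [Matrix.conjTranspose_add, Matrix.add_mul, Matrix.mul_add, Matrix.add_mul, Matrix.add_mul,
    hW, hW, hUV, hVU, add_zero, zero_add, ← Matrix.single_add, add_comm] at hsum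
  exact ha (by simpa only [Matrix.single_apply_same, Matrix.zero_apply] using congrFun₂ hsum () ())

variable [DecidableEq m]

theorem fromRows_mul_mul_conjTranspose_eq_one (hH : H.IsHermitian)
    {V : Matrix m n F} {U : Matrix Unit n F} (hV : V * H * Vᴴ = 1) (hU : U * H * Uᴴ = 1)
    (hUV : U * H * Vᴴ = 0) :
    Matrix.fromRows V U * H * (Matrix.fromRows V U)ᴴ = 1 := by
  have hVU : V * H * Uᴴ = 0 := by
    rw [← conjTranspose_mul_mul_conjTranspose hH, hUV, Matrix.conjTranspose_zero]
  rw [Matrix.fromRows_mul, Matrix.conjTranspose_fromRows_eq_fromCols_conjTranspose,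
    Matrix.fromRows_mul_fromCols, hV, hU, hUV, hVU, Matrix.fromBlocks_one]

theorem submatrix_mul_mul_conjTranspose_eq_one [DecidableEq l] {V : Matrix m n F}
    (hV : V * H * Vᴴ = 1) (e : l ≃ m) : V.submatrix e id * H * (V.submatrix e id)ᴴ = 1 := by
  rw [← Matrix.submatrix_one_equiv e, ← hV]
  rfl

variable [Fintype m] [DecidableEq n]

/-- The rows of `W * (1 - H * Vᴴ * V)` are orthogonal to those of `V`. -/
theorem exists_row_orthonormal (ha : ∃ a : F, a + star a ≠ 0)
    (hnorm : ∀ a : F, a ≠ 0 → star a = a → ∃ c, c * star c = a)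
    (hH : H.IsHermitian) (hHu : IsUnit H) {V : Matrix m n F} (hV : V * H * Vᴴ = 1)
    (hcard : Fintype.card m < Fintype.card n) :
    ∃ U : Matrix Unit n F, U * H * Uᴴ = 1 ∧ U * H * Vᴴ = 0 := by
  let P : Matrix n n F := 1 - H * Vᴴ * V
  have hPV : P * H * Vᴴ = 0 := by
    rw [Matrix.mul_assoc, Matrix.sub_mul, Matrix.one_mul, Matrix.mul_assoc _ V,
      ← Matrix.mul_assoc V, hV, Matrix.mul_one, sub_self]
  have hPP : P * H * Pᴴ = P * H := by
    rw [Matrix.conjTranspose_sub, Matrix.conjTranspose_one, Matrix.conjTranspose_mul _ V,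
      Matrix.mul_sub, Matrix.mul_one, ← Matrix.mul_assoc, hPV, Matrix.zero_mul, sub_zero]
  have hP0 : P * H * Pᴴ ≠ 0 := by
    rw [hPP, Ne, hHu.mul_left_eq_zero, sub_eq_zero]
    exact one_ne_mul_of_card_lt hcard _ _
  have hPherm := Matrix.isHermitian_mul_mul_conjTranspose P hH
  obtain ⟨W, hW⟩ := exists_row_mul_mul_conjTranspose_ne_zero ha hPherm hP0
  obtain ⟨c, hc⟩ := hnorm ((W * (P * H * Pᴴ) * Wᴴ) () ())
    (fun h0 => hW (Matrix.ext fun _ _ => h0))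
    (congrFun₂ (conjTranspose_mul_mul_conjTranspose hPherm W W) () ())
  have hc0 : c * star c ≠ 0 := fun h0 => hW (Matrix.ext fun _ _ => hc.symm.trans h0)
  refine ⟨c⁻¹ • (W * P), Matrix.ext fun _ _ => ?_, ?_⟩
  · calc (c⁻¹ • (W * P) * H * (c⁻¹ • (W * P))ᴴ) () ()
        = c⁻¹ * star c⁻¹ * (W * (P * H * Pᴴ) * Wᴴ) () () := by
          simp only [Matrix.conjTranspose_smul, Matrix.conjTranspose_mul, Matrix.smul_mul,
            Matrix.mul_smul, Matrix.smul_apply, smul_eq_mul, Matrix.mul_assoc, mul_assoc,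
            mul_left_comm]
      _ = 1 := by rw [← hc, star_inv₀, ← mul_inv, inv_mul_cancel₀ hc0]
  · rw [Matrix.smul_mul, Matrix.smul_mul, Matrix.mul_assoc W, Matrix.mul_assoc W, hPV,
      Matrix.mul_zero, smul_zero]

theorem exists_mul_mul_conjTranspose_eq_one (ha : ∃ a : F, a + star a ≠ 0)
    (hnorm : ∀ a : F, a ≠ 0 → star a = a → ∃ c, c * star c = a)
    (hH : H.IsHermitian) (hHu : IsUnit H) : ∃ G, G * H * Gᴴ = 1 := by
  have hrows (k : ℕ) (hk : k ≤ Fintype.card n) : ∃ V : Matrix (Fin k) n F, V * H * Vᴴ = 1 := by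
    induction k with
    | zero => exact ⟨0, Subsingleton.elim _ _⟩
    | succ k ih =>
      obtain ⟨V, hV⟩ := ih (Nat.le_of_succ_le hk)
      obtain ⟨U, hU, hUV⟩ := exists_row_orthonormal ha hnorm hH hHu hV (by simpa using hk)
      exact ⟨_, submatrix_mul_mul_conjTranspose_eq_one
        (fromRows_mul_mul_conjTranspose_eq_one hH hV hU hUV)
        (Fintype.equivOfCardEq (by simp))⟩
  obtain ⟨V, hV⟩ := hrows _ le_rfl
  exact ⟨_, submatrix_mul_mul_conjTranspose_eq_one hV (Fintype.equivFin n)⟩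

end HermitianForm

section UnitaryMatrices

open Set

variable {F K n : Type*} [Field F] [StarRing F] [Field K] [Algebra F K] [Fintype n] [DecidableEq n]
  {H H₁ H₂ A B : Matrix n n F} {S : Finset K}

theorem exists_mul_mul_conjTranspose_eq (ha : ∃ a : F, a + star a ≠ 0)
    (hnorm : ∀ a : F, a ≠ 0 → star a = a → ∃ c, c * star c = a) (hH₁ : H₁.IsHermitian)
    (hH₂ : H₂.IsHermitian) (hH₁u : IsUnit H₁) (hH₂u : IsUnit H₂) :
    ∃ G : (Matrix n n F)ˣ, G.val * H₁ * G.valᴴ = H₂ := by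
  obtain ⟨G₁, hG₁⟩ := exists_mul_mul_conjTranspose_eq_one ha hnorm hH₁ hH₁u
  obtain ⟨G₂, hG₂⟩ := exists_mul_mul_conjTranspose_eq_one ha hnorm hH₂ hH₂u
  obtain ⟨G₁, rfl⟩ := IsUnit.of_mul_eq_one _ ((mul_assoc _ _ _).symm.trans hG₁)
  obtain ⟨G₂, rfl⟩ := IsUnit.of_mul_eq_one _ ((mul_assoc _ _ _).symm.trans hG₂)
  refine ⟨G₂⁻¹ * G₁, ?_⟩
  calc (G₂⁻¹ * G₁).val * H₁ * (G₂⁻¹ * G₁).valᴴ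
      = G₂⁻¹.val * (G₁.val * H₁ * G₁.valᴴ) * G₂⁻¹.valᴴ := by
        simp only [Units.val_mul, Matrix.conjTranspose_mul, mul_assoc]
    _ = (G₂⁻¹ * G₂).val * H₂ * (G₂⁻¹ * G₂).valᴴ := by
        rw [hG₁, ← hG₂]
        simp only [Units.val_mul, Matrix.conjTranspose_mul, mul_assoc]
    _ = H₂ := by
        rw [inv_mul_cancel, Units.val_one, Matrix.conjTranspose_one, one_mul, mul_one]

namespace IsIsometry

theorem conj (hAH : IsIsometry H A) (G : (Matrix n n F)ˣ) :
    IsIsometry (G.val * H * G.valᴴ) (G.val * A * G⁻¹.val) := by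
  have hG : G.valᴴ * G⁻¹.valᴴ = 1 := by
    rw [← Matrix.conjTranspose_mul, Units.inv_mul, Matrix.conjTranspose_one]
  calc G.val * A * G⁻¹.val * (G.val * H * G.valᴴ) * (G.val * A * G⁻¹.val)ᴴ
      = G.val * A * (G⁻¹.val * G.val) * H * (G.valᴴ * G⁻¹.valᴴ) * Aᴴ * G.valᴴ := by
        simp only [Matrix.conjTranspose_mul, mul_assoc]
    _ = G.val * (A * H * Aᴴ) * G.valᴴ := by
        rw [Units.inv_mul, hG]
        simp only [mul_one, mul_assoc]
    _ = G.val * H * G.valᴴ := by rw [hAH]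

variable {τ : K →+* K} {q : ℕ} [IsAlgClosed K]

theorem exists_mul_eq_mul (hAH : IsIsometry H A) (hBH : IsIsometry H B)
    (h : IsConjFrobenius F τ q) (hH : H.IsHermitian) (hHu : IsUnit H)
    (hA : HasSimpleSpectrum A S) (hB : HasSimpleSpectrum B S) :
    ∃ V, IsIsometry H V ∧ V * A = B * V := by
  obtain ⟨_, ⟨G, rfl⟩, hG⟩ := hA.exists_isUnit_mul_eq_mul hB
  have hGB : G⁻¹.val * B * G.val = A := by rw [mul_assoc, ← hG, Units.inv_mul_cancel_left]
  have hAH' : IsIsometry (G⁻¹.val * H * G⁻¹.valᴴ) A := by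
    simpa only [inv_inv, hGB] using hBH.conj G⁻¹
  obtain ⟨U, hUA, hU⟩ := hAH.exists_commute_mul_mul_conjTranspose_eq hAH' h hHu
    ((G⁻¹.isUnit.mul hHu).mul ((Matrix.isUnit_conjTranspose _).2 G⁻¹.isUnit)) hH
    (Matrix.isHermitian_mul_mul_conjTranspose _ hH) hA
  refine ⟨G.val * U, ?_, ?_⟩
  · calc G.val * U * H * (G.val * U)ᴴ = G.val * (U * H * Uᴴ) * G.valᴴ := by
          simp only [Matrix.conjTranspose_mul, mul_assoc]
      _ = (G * G⁻¹).val * H * (G * G⁻¹).valᴴ := by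
          rw [hU, Units.val_mul]
          simp only [Matrix.conjTranspose_mul, mul_assoc]
      _ = H := by
          rw [mul_inv_cancel, Units.val_one, Matrix.conjTranspose_one, one_mul, mul_one]
  · rw [mul_assoc, ← hUA.eq, ← mul_assoc, hG, mul_assoc]

end IsIsometry

variable {τ : K →+* K} {q : ℕ}

namespace HasSimpleSpectrum

theorem conjTranspose_inv (hA : HasSimpleSpectrum A S) (h : IsConjFrobenius F τ q)
    (hAu : IsUnit A) (hS : MapsTo (conjInv τ) S S) : HasSimpleSpectrum A⁻¹ᴴ S := by
  refine .of_aeval_charpoly_eq_zero hA.card_eq fun x hx => ?_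
  obtain ⟨y, hy, rfl⟩ := exists_mem_apply_eq (conjInv_injective τ) hS hx
  exact hA.aeval_conjInv_eq_zero h hAu (Matrix.aeval_self_charpoly _) hy

theorem exists_isIsometry (hA : HasSimpleSpectrum A S) (h : IsConjFrobenius F τ q)
    (hAu : IsUnit A) (hS : MapsTo (conjInv τ) S S) : ∃ G, IsUnit G ∧ IsIsometry G A := by
  obtain ⟨G, hGu, hG⟩ := (hA.conjTranspose_inv h hAu hS).exists_isUnit_mul_eq_mul hA
  refine ⟨G, hGu, ?_⟩
  rw [IsIsometry, ← hG, mul_assoc, ← Matrix.conjTranspose_mul,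
    A.mul_nonsing_inv ((Matrix.isUnit_iff_isUnit_det A).1 hAu), Matrix.conjTranspose_one, mul_one]

end HasSimpleSpectrum

theorem exists_isIsometry_hasSimpleSpectrum [IsAlgClosed K] (h : IsConjFrobenius F τ q)
    (hH : H.IsHermitian) (hHu : IsUnit H) (hcard : S.card = Fintype.card n) (h0 : (0 : K) ∉ S)
    (hS : MapsTo (conjInv τ) S S) : ∃ A, IsIsometry H A ∧ HasSimpleSpectrum A S := by
  obtain ⟨f, hf, hfS⟩ := h.exists_map_eq_prod (mapsTo_comp_self_of_mapsTo_conjInv hS)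
  obtain ⟨A, rfl⟩ := exists_charpoly_eq (n := n) hf (by
    rw [← natDegree_map (algebraMap F K), hfS, natDegree_finsetProd_X_sub_C_eq_card S fun x => x,
      hcard])
  have hA : HasSimpleSpectrum A S := hfS
  have hAu : IsUnit A := by
    rw [← aeval_X (R := F) A]
    exact hA.isUnit_aeval fun x hx => by
      rw [aeval_X]
      exact ne_of_mem_of_not_mem hx h0
  obtain ⟨G, hGu, hG⟩ := hA.exists_isIsometry h hAu hS
  obtain ⟨H', hHu', hH', hAH'⟩ := hG.exists_isHermitian h hGu hA
  obtain ⟨C, hC⟩ := exists_mul_mul_conjTranspose_eq h.exists_add_star_ne_zero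
    (fun a ha0 ha => h.exists_mul_star_eq ha0 ha) hH' hH hHu' hHu
  exact ⟨C.val * A * C⁻¹.val, hC ▸ hAH'.conj C, hA.conj C⟩

end UnitaryMatrices

section UnitaryGroup

open Function Set

variable {F K : Type*} [Field F] {n : ℕ}

theorem antidiagMat_mul_self : antidiagMat F n * antidiagMat F n = 1 := by
  ext i j
  rw [Matrix.mul_apply, Finset.sum_eq_single (Fin.rev i)]
  · simp only [antidiagMat, Matrix.of_apply, Fin.val_rev, Matrix.one_apply, Fin.ext_iff]
    rw [if_pos (by omega), one_mul]
    exact if_congr (by omega) rfl rfl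
  · intro k _ hk
    have hik : (i : ℕ) + k + 1 ≠ n := fun h => hk (Fin.ext (by rw [Fin.val_rev]; omega))
    rw [antidiagMat, Matrix.of_apply, if_neg hik, zero_mul]
  · exact fun h => absurd (Finset.mem_univ _) h

theorem isUnit_antidiagMat : IsUnit (antidiagMat F n) :=
  .of_mul_eq_one _ antidiagMat_mul_self

variable [StarRing F]

theorem isHermitian_antidiagMat : (antidiagMat F n).IsHermitian := by
  ext i j
  simp only [antidiagMat, Matrix.conjTranspose_apply, Matrix.of_apply, add_comm (j : ℕ),
    apply_ite star, star_one, star_zero]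

theorem mem_unitaryGrp_iff {A : GL (Fin n) F} :
    A ∈ unitaryGrp (starRingEnd F) n ↔ IsIsometry (antidiagMat F n) A.val :=
  Iff.rfl

theorem exists_unitaryGrp_eq {A : Matrix (Fin n) (Fin n) F}
    (hA : IsIsometry (antidiagMat F n) A) : ∃ U : unitaryGrp (starRingEnd F) n, U.val.val = A :=
  ⟨⟨(hA.isUnit isUnit_antidiagMat).unit, mem_unitaryGrp_iff.2 hA⟩, rfl⟩

variable [Field K] [Algebra F K] {τ : K →+* K} {q : ℕ} {A B : unitaryGrp (starRingEnd F) n}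
  {S T : Finset K}

/-- The condition on an eigenvalue `x` of a separable unitary matrix for that matrix to have a
unitary `M`-th root: `x` has an `M`-th root whose period under `conjInv τ` divides that of `x`. -/
def HasConjInvRoot (τ : K →+* K) (M : ℕ) (x : K) : Prop :=
  x ≠ 0 ∧ ∃ y, y ^ M = x ∧ IsPeriodicPt (conjInv τ) (minimalPeriod (conjInv τ) x) y

theorem exists_pow_eq_iff_hasConjInvRoot (h : IsConjFrobenius F τ q)
    (hA : HasSimpleSpectrum A.val.val S) {M : ℕ} (hM : M ≠ 0) :
    (∃ B, B ^ M = A) ↔ ∀ x ∈ S, HasConjInvRoot τ M x := by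
  have hAH := mem_unitaryGrp_iff.1 A.2
  have hroot : (∃ B, B ^ M = A) ↔ ∃ B, IsIsometry (antidiagMat F n) B ∧ B ^ M = A.val.val := by
    constructor
    · rintro ⟨B, rfl⟩
      exact ⟨B.val.val, mem_unitaryGrp_iff.1 B.2, rfl⟩
    · rintro ⟨B, hB, hBA⟩
      obtain ⟨B, rfl⟩ := exists_unitaryGrp_eq hB
      exact ⟨B, Subtype.ext (Units.ext hBA)⟩
  rw [hroot, hAH.exists_pow_eq_iff h isUnit_antidiagMat hA hM]
  exact (h.exists_conjInv_equivariant_pow_iff (hAH.mapsTo_conjInv h isUnit_antidiagMat hA) M).trans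
    (forall₂_congr fun x hx => (and_iff_right (hA.ne_zero A.val.isUnit hx)).symm)

theorem hasSimpleSpectrum_conj (hA : HasSimpleSpectrum A.val.val S)
    (C : unitaryGrp (starRingEnd F) n) : HasSimpleSpectrum (C * A * C⁻¹).val.val S :=
  hA.conj C.val

theorem isConj_iff_of_hasSimpleSpectrum [IsAlgClosed K] (h : IsConjFrobenius F τ q)
    (hA : HasSimpleSpectrum A.val.val S) (hB : HasSimpleSpectrum B.val.val T) :
    IsConj A B ↔ S = T := by
  rw [isConj_iff]
  constructor
  · rintro ⟨C, rfl⟩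
    exact (hasSimpleSpectrum_conj hA C).unique hB
  · rintro rfl
    obtain ⟨V, hVH, hV⟩ := (mem_unitaryGrp_iff.1 A.2).exists_mul_eq_mul (mem_unitaryGrp_iff.1 B.2) h
      isHermitian_antidiagMat isUnit_antidiagMat hA hB
    obtain ⟨C, rfl⟩ := exists_unitaryGrp_eq hVH
    exact ⟨C, mul_inv_eq_iff_eq_mul.2 (Subtype.ext (Units.ext hV))⟩

theorem exists_unitaryGrp_hasSimpleSpectrum [IsAlgClosed K] (h : IsConjFrobenius F τ q)
    (hcard : S.card = n) (h0 : (0 : K) ∉ S) (hS : MapsTo (conjInv τ) S S) :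
    ∃ A : unitaryGrp (starRingEnd F) n, HasSimpleSpectrum A.val.val S := by
  obtain ⟨A, hAH, hA⟩ := exists_isIsometry_hasSimpleSpectrum h isHermitian_antidiagMat
    isUnit_antidiagMat (hcard.trans (Fintype.card_fin n).symm) h0 hS
  obtain ⟨U, rfl⟩ := exists_unitaryGrp_eq hAH
  exact ⟨U, hA⟩

end UnitaryGroup

section MinimalPolynomials

open Function Set

variable {F K : Type*} [Field F] [Field K] [Algebra F K] {τ : K →+* K} {q M : ℕ} {x y : K}

theorem monic_tildePoly (σ : F →+* F) {f : F[X]} (hf : f.coeff 0 ≠ 0) :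
    (tildePoly σ f).Monic := by
  have hσ : σ (f.coeff 0) ≠ 0 := (map_ne_zero σ).2 hf
  rw [Monic, tildePoly, leadingCoeff_C_mul_of_isUnit (inv_ne_zero hσ).isUnit, reverse_leadingCoeff,
    trailingCoeff_eq_coeff_zero (by rwa [coeff_map]), coeff_map, inv_mul_cancel₀ hσ]

theorem natDegree_tildePoly (σ : F →+* F) {f : F[X]} (hf : f.coeff 0 ≠ 0) :
    (tildePoly σ f).natDegree = f.natDegree := by
  have hσ : σ (f.coeff 0) ≠ 0 := (map_ne_zero σ).2 hf
  rw [tildePoly, natDegree_C_mul (inv_ne_zero hσ), reverse_natDegree,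
    natTrailingDegree_eq_zero.2 (Or.inr (by rwa [coeff_map])), natDegree_map, Nat.sub_zero]

theorem exists_minpoly_eq [IsAlgClosed K] {f : F[X]} (hf : f.Monic) (hirr : Irreducible f)
    (h0 : f.coeff 0 ≠ 0) : ∃ x : K, x ≠ 0 ∧ minpoly F x = f := by
  obtain ⟨x, hx⟩ := IsAlgClosed.exists_aeval_eq_zero K f hirr.degree_pos.ne'
  have hxf := minpoly.eq_of_irreducible_of_monic hirr hx hf
  refine ⟨x, ?_, hxf.symm⟩
  rintro rfl
  rw [hxf, minpoly.zero, coeff_X_zero] at h0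
  exact h0 rfl

theorem minpoly_dvd_minpoly_comp (hy : y ^ M = x) :
    minpoly F y ∣ (minpoly F x).comp (X ^ M) := by
  refine minpoly.dvd F y ?_
  rw [aeval_comp, map_pow, aeval_X, hy, minpoly.aeval]

variable [StarRing F]

namespace IsConjFrobenius

theorem mem_periodicPts_conjInv_iterate_two (h : IsConjFrobenius F τ q) (x : K) :
    x ∈ periodicPts (conjInv τ)^[2] := by
  obtain ⟨k, hk, hx⟩ := h.mem_periodicPts_conjInv x
  exact mk_mem_periodicPts hk (hx.iterate 2)

theorem mapsTo_orbitFinset (h : IsConjFrobenius F τ q) (x : K) :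
    MapsTo (τ.comp τ) (orbitFinset (conjInv τ)^[2] x : Set K)
      (orbitFinset (conjInv τ)^[2] x) := by
  intro y hy
  rw [Finset.mem_coe, mem_orbitFinset (h.mem_periodicPts_conjInv_iterate_two x)] at hy ⊢
  obtain ⟨k, rfl⟩ := hy
  exact ⟨k + 1, by rw [iterate_succ_apply']; exact conjInv_conjInv τ _⟩

theorem aeval_conjInv_iterate_two_mul (h : IsConjFrobenius F τ q) {P : F[X]} (hx : aeval x P = 0)
    (k : ℕ) : aeval ((conjInv τ)^[2 * k] x) P = 0 := by
  induction k with
  | zero => exact hx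
  | succ k ih =>
    rw [mul_add_one, add_comm, iterate_add_apply]
    change aeval (conjInv τ (conjInv τ _)) P = 0
    rw [conjInv_conjInv, h.aeval_comp_self, ih, map_zero, map_zero]

variable [Algebra.IsAlgebraic F K]

theorem map_minpoly (h : IsConjFrobenius F τ q) (x : K) :
    (minpoly F x).map (algebraMap F K) = ∏ y ∈ orbitFinset (conjInv τ)^[2] x, (X - C y) := by
  have hper := h.mem_periodicPts_conjInv_iterate_two x
  obtain ⟨f, -, hfS⟩ := h.exists_map_eq_prod (h.mapsTo_orbitFinset x)
  have hfx : aeval x f = 0 := by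
    rw [← eval_map_algebraMap, hfS, eval_prod]
    refine Finset.prod_eq_zero (self_mem_orbitFinset hper) ?_
    rw [eval_sub, eval_X, eval_C, sub_self]
  refine eq_of_monic_of_associated ((minpoly.monic (Algebra.IsIntegral.isIntegral x)).map _)
    (monic_prod_X_sub_C id _) (associated_of_dvd_dvd ?_ ?_)
  · exact hfS ▸ Polynomial.map_dvd _ (minpoly.dvd F x hfx)
  · refine prod_X_sub_C_dvd_map fun y hy => ?_
    obtain ⟨k, rfl⟩ := (mem_orbitFinset hper).1 hy
    rw [← iterate_mul]
    exact h.aeval_conjInv_iterate_two_mul (minpoly.aeval F x) k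

theorem natDegree_minpoly (h : IsConjFrobenius F τ q) (x : K) :
    (minpoly F x).natDegree =
      minimalPeriod (conjInv τ) x / (minimalPeriod (conjInv τ) x).gcd 2 := by
  rw [← natDegree_map (algebraMap F K), h.map_minpoly, natDegree_finsetProd_X_sub_C_eq_card,
    card_orbitFinset, minimalPeriod_iterate_eq_div_gcd two_ne_zero]

theorem natDegree_minpoly_of_odd (h : IsConjFrobenius F τ q)
    (hx : Odd (minimalPeriod (conjInv τ) x)) :
    (minpoly F x).natDegree = minimalPeriod (conjInv τ) x := by
  rw [h.natDegree_minpoly, Nat.coprime_two_right.2 hx, Nat.div_one]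

theorem two_mul_natDegree_minpoly_of_even (h : IsConjFrobenius F τ q)
    (hx : Even (minimalPeriod (conjInv τ) x)) :
    2 * (minpoly F x).natDegree = minimalPeriod (conjInv τ) x := by
  rw [h.natDegree_minpoly, Nat.gcd_eq_right hx.two_dvd, Nat.mul_div_cancel' hx.two_dvd]

theorem minimalPeriod_dvd_two_mul_natDegree_minpoly (h : IsConjFrobenius F τ q) (x : K) :
    minimalPeriod (conjInv τ) x ∣ 2 * (minpoly F x).natDegree := by
  rcases Nat.even_or_odd (minimalPeriod (conjInv τ) x) with hx | hx
  · exact (h.two_mul_natDegree_minpoly_of_even hx).symm.dvd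
  · exact h.natDegree_minpoly_of_odd hx ▸ dvd_mul_left _ _

theorem aeval_minpoly_eq_zero_iff (h : IsConjFrobenius F τ q) :
    aeval y (minpoly F x) = 0 ↔ ∃ k, (conjInv τ)^[2 * k] x = y := by
  rw [← eval_map_algebraMap, h.map_minpoly, eval_prod, Finset.prod_eq_zero_iff]
  simp only [eval_sub, eval_X, eval_C, sub_eq_zero, exists_eq_right',
    mem_orbitFinset (h.mem_periodicPts_conjInv_iterate_two x), iterate_mul]

theorem minpoly_eq_minpoly_iff (h : IsConjFrobenius F τ q) :
    minpoly F x = minpoly F y ↔ ∃ k, (conjInv τ)^[2 * k] x = y := by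
  have hx : IsIntegral F x := Algebra.IsIntegral.isIntegral x
  rw [← h.aeval_minpoly_eq_zero_iff]
  refine ⟨fun hxy => hxy ▸ minpoly.aeval F y, fun hy => ?_⟩
  exact minpoly.eq_of_irreducible_of_monic (minpoly.irreducible hx) hy (minpoly.monic hx)

theorem tildePoly_minpoly (h : IsConjFrobenius F τ q) (hx : x ≠ 0) :
    tildePoly (starRingEnd F) (minpoly F x) = minpoly F (conjInv τ x) := by
  have h0 := minpoly.coeff_zero_ne_zero (Algebra.IsIntegral.isIntegral (R := F) x) hx
  refine eq_of_monic_of_dvd_of_natDegree_le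
    (minpoly.monic (Algebra.IsIntegral.isIntegral _)) (monic_tildePoly _ h0)
    (minpoly.dvd F _ ?_) ?_
  · let _ := invertibleOfNonzero ((map_ne_zero τ).2 hx)
    have hrev := eval₂_reverse_eq_zero_iff (algebraMap F K) (τ x)
      ((minpoly F x).map (starRingEnd F))
    rw [← aeval_def, ← aeval_def, h.aeval_map_star, minpoly.aeval, map_zero, invOf_eq_inv] at hrev
    rw [tildePoly, map_mul, conjInv_apply, hrev.2 rfl, mul_zero]
  · rw [natDegree_tildePoly _ h0, h.natDegree_minpoly, h.natDegree_minpoly,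
      minimalPeriod_apply (h.mem_periodicPts_conjInv x)]

theorem minpoly_conjInv_eq_iff (h : IsConjFrobenius F τ q) :
    minpoly F (conjInv τ x) = minpoly F x ↔ Odd (minimalPeriod (conjInv τ) x) := by
  rw [h.minpoly_eq_minpoly_iff]
  simp only [← iterate_succ_apply]
  constructor
  · rintro ⟨k, hk⟩
    exact Odd.of_dvd_nat (odd_two_mul_add_one k) (IsPeriodicPt.minimalPeriod_dvd hk)
  · rintro ⟨k, hk⟩
    exact ⟨k, (congrArg ((conjInv τ)^[·] x) hk.symm).trans iterate_minimalPeriod⟩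

theorem isSCIM_minpoly_iff (h : IsConjFrobenius F τ q) (hx : x ≠ 0) :
    IsSCIM (starRingEnd F) (minpoly F x) ↔ Odd (minimalPeriod (conjInv τ) x) := by
  have hi : IsIntegral F x := Algebra.IsIntegral.isIntegral x
  rw [← h.minpoly_conjInv_eq_iff (F := F), ← h.tildePoly_minpoly hx]
  exact ⟨fun hf => hf.2.2.2, fun hf => ⟨minpoly.monic hi, minpoly.irreducible hi,
    minpoly.coeff_zero_ne_zero hi hx, hf⟩⟩

/-- Since `y ^ M` is conjugate to `x` over `F`, some conjugate of `y`, which has the same period as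
`y`, is an `M`-th root of `x`. -/
theorem hasConjInvRoot_of_aeval_comp (h : IsConjFrobenius F τ q) (hx : x ≠ 0)
    (hy : aeval y ((minpoly F x).comp (X ^ M)) = 0)
    (hper : minimalPeriod (conjInv τ) y ∣ minimalPeriod (conjInv τ) x) :
    HasConjInvRoot τ M x := by
  rw [aeval_comp, map_pow, aeval_X] at hy
  have hconj : minpoly F (y ^ M) = minpoly F x :=
    (h.minpoly_eq_minpoly_iff.2 (h.aeval_minpoly_eq_zero_iff.1 hy)).symm
  obtain ⟨j, hj⟩ := h.minpoly_eq_minpoly_iff.1 hconj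
  refine ⟨hx, (conjInv τ)^[2 * j] y, ?_, ?_⟩
  · rw [← hj, iterate_map_pow]
  · exact (isPeriodicPt_iff_minimalPeriod_dvd.2 hper).apply_iterate _

end IsConjFrobenius

namespace HasConjInvRoot

theorem apply (hx : HasConjInvRoot τ M x) (h : IsConjFrobenius F τ q) :
    HasConjInvRoot τ M (conjInv τ x) := by
  obtain ⟨hx0, y, rfl, hy⟩ := hx
  refine ⟨(_root_.map_ne_zero _).2 hx0, conjInv τ y, (map_pow _ y M).symm, ?_⟩
  rw [minimalPeriod_apply (h.mem_periodicPts_conjInv _)]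
  exact hy.apply

theorem exists_minimalPeriod_eq (hx : HasConjInvRoot τ M x) :
    ∃ y, y ^ M = x ∧ minimalPeriod (conjInv τ) y = minimalPeriod (conjInv τ) x := by
  obtain ⟨-, y, rfl, hy⟩ := hx
  refine ⟨y, rfl, Nat.dvd_antisymm hy.minimalPeriod_dvd (IsPeriodicPt.minimalPeriod_dvd ?_)⟩
  rw [IsPeriodicPt, IsFixedPt, iterate_map_pow, iterate_minimalPeriod]

end HasConjInvRoot

namespace IsConjFrobenius

variable [Algebra.IsAlgebraic F K] [IsAlgClosed K]

theorem isMtildePowerPoly_minpoly_iff (h : IsConjFrobenius F τ q) (hM : M ≠ 0) (hx0 : x ≠ 0) :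
    IsMtildePowerPoly (starRingEnd F) M (minpoly F x) ↔
      Odd (minimalPeriod (conjInv τ) x) ∧ HasConjInvRoot τ M x := by
  rw [IsMtildePowerPoly, h.isSCIM_minpoly_iff hx0]
  refine and_congr_right fun hodd => ⟨?_, fun hx => ?_⟩
  · rintro ⟨g, hg, hdeg, hdvd⟩
    obtain ⟨y, hy0, rfl⟩ := exists_minpoly_eq (K := K) hg.1 hg.2.1 hg.2.2.1
    rw [h.isSCIM_minpoly_iff hy0] at hg
    rw [h.natDegree_minpoly_of_odd hg, h.natDegree_minpoly_of_odd hodd] at hdeg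
    exact h.hasConjInvRoot_of_aeval_comp hx0
      (aeval_eq_zero_of_dvd_aeval_eq_zero hdvd (minpoly.aeval F y)) hdeg.dvd
  · obtain ⟨y, rfl, hy⟩ := hx.exists_minimalPeriod_eq
    refine ⟨minpoly F y, (h.isSCIM_minpoly_iff ((pow_ne_zero_iff hM).1 hx0)).2 (hy ▸ hodd), ?_,
      minpoly_dvd_minpoly_comp rfl⟩
    rw [h.natDegree_minpoly, h.natDegree_minpoly, hy]

theorem isMPowerPoly_minpoly_iff (h : IsConjFrobenius F τ q) (hx0 : x ≠ 0)
    (heven : Even (minimalPeriod (conjInv τ) x)) :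
    IsMPowerPoly M (minpoly F x) ↔ HasConjInvRoot τ M x := by
  have hi (z : K) : IsIntegral F z := Algebra.IsIntegral.isIntegral z
  rw [IsMPowerPoly, and_iff_right (minpoly.monic (hi x)),
    and_iff_right (minpoly.irreducible (hi x))]
  constructor
  · rintro ⟨g, hg, hdeg, hdvd⟩
    obtain ⟨y, hy⟩ := IsAlgClosed.exists_aeval_eq_zero K g hg.degree_pos.ne'
    refine h.hasConjInvRoot_of_aeval_comp hx0 (aeval_eq_zero_of_dvd_aeval_eq_zero hdvd hy) ?_
    rw [← h.two_mul_natDegree_minpoly_of_even heven, ← hdeg]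
    exact (h.minimalPeriod_dvd_two_mul_natDegree_minpoly y).trans
      (mul_dvd_mul_left 2 (natDegree_eq_of_degree_eq (degree_eq_degree_of_associated
        ((minpoly.irreducible (hi y)).associated_of_dvd hg (minpoly.dvd F y hy)))).dvd)
  · intro hx
    obtain ⟨y, rfl, hy⟩ := hx.exists_minimalPeriod_eq
    refine ⟨minpoly F y, minpoly.irreducible (hi y), ?_, minpoly_dvd_minpoly_comp rfl⟩
    rw [h.natDegree_minpoly, h.natDegree_minpoly, hy]

end IsConjFrobenius

end MinimalPolynomials

section StableSets

open Function Set

theorem ncard_image_eq_ncard_image {α β γ : Type*} {f : α → β} {g : α → γ} {s : Set α}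
    (h : ∀ x ∈ s, ∀ y ∈ s, f x = f y ↔ g x = g y) : (f '' s).ncard = (g '' s).ncard := by
  have hker : Setoid.ker (s.domRestrict f) = Setoid.ker (s.domRestrict g) :=
    Setoid.ext fun x y => h x x.2 y y.2
  rw [← range_domRestrict, ← range_domRestrict, ← Nat.card_coe_set_eq, ← Nat.card_coe_set_eq,
    ← Nat.card_congr (Setoid.quotientKerEquivRange _), hker,
    Nat.card_congr (Setoid.quotientKerEquivRange _)]

variable {α : Type*} {f : α → α} {U : Set α}

/-- The orbits of size `m` of points of `U`. -/
def orbitsOfCard (f : α → α) (U : Set α) (m : ℕ) : Set (Finset α) :=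
  {o ∈ orbitFinset f '' U | o.card = m}

/-- The finite subsets of `U` of size `n` that are stable under `f`. -/
def stableOfCard (f : α → α) (U : Set α) (n : ℕ) : Set (Finset α) :=
  {S | S.card = n ∧ MapsTo f S S ∧ (S : Set α) ⊆ U}

theorem orbitsOfCard_eq_image (f : α → α) (U : Set α) (m : ℕ) :
    orbitsOfCard f U m = orbitFinset f '' {x ∈ U | minimalPeriod f x = m} := by
  ext o
  constructor
  · rintro ⟨⟨x, hx, rfl⟩, hm⟩
    exact ⟨x, ⟨hx, card_orbitFinset f x ▸ hm⟩, rfl⟩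
  · rintro ⟨x, ⟨hx, hm⟩, rfl⟩
    exact ⟨⟨x, hx, rfl⟩, (card_orbitFinset f x).trans hm⟩

theorem ncard_stableOfCard_zero (f : α → α) (U : Set α) : (stableOfCard f U 0).ncard = 1 := by
  refine ncard_eq_one.2 ⟨∅, Set.ext fun S => ⟨fun hS => Finset.card_eq_zero.1 hS.1, ?_⟩⟩
  rintro rfl
  simp only [stableOfCard, mem_ofPred_eq, Finset.card_empty, Finset.coe_empty, mapsTo_empty,
    empty_subset, and_self]

theorem orbitFinset_subset (hf : ∀ x, x ∈ periodicPts f) {S : Finset α} (hS : MapsTo f S S) {x : α}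
    (hx : x ∈ S) : orbitFinset f x ⊆ S := by
  intro y hy
  obtain ⟨k, rfl⟩ := (mem_orbitFinset (hf x)).1 hy
  exact hS.iterate k hx

theorem orbitFinset_eq_of_mem (hf : ∀ x, x ∈ periodicPts f) {o : Finset α}
    (ho : o ∈ range (orbitFinset f)) {x : α} (hx : x ∈ o) : orbitFinset f x = o := by
  obtain ⟨y, rfl⟩ := ho
  obtain ⟨k, rfl⟩ := (mem_orbitFinset (hf y)).1 hx
  exact orbitFinset_iterate (hf y) k

section BiUnion

variable [DecidableEq α] {t : Finset (Finset α)}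

theorem card_biUnion_orbits (hf : ∀ x, x ∈ periodicPts f)
    (ht : ∀ o ∈ t, o ∈ range (orbitFinset f)) : (t.biUnion id).card = ∑ o ∈ t, o.card := by
  refine Finset.card_biUnion fun o ho o' ho' hne => Finset.disjoint_left.2 fun y hy hy' => hne ?_
  rw [← orbitFinset_eq_of_mem hf (ht o ho) hy, orbitFinset_eq_of_mem hf (ht o' ho') hy']

theorem mapsTo_biUnion_orbits (hf : ∀ x, x ∈ periodicPts f)
    (ht : ∀ o ∈ t, o ∈ range (orbitFinset f)) :
    MapsTo f (t.biUnion id : Finset α) (t.biUnion id : Finset α) := by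
  intro x hx
  obtain ⟨o, ho, hxo⟩ := Finset.mem_biUnion.1 hx
  refine Finset.mem_biUnion.2 ⟨o, ho, ?_⟩
  rw [id_eq, ← orbitFinset_eq_of_mem hf (ht o ho) hxo, mem_orbitFinset (hf x)]
  exact ⟨1, rfl⟩

theorem biUnion_orbits_subset (hf : ∀ x, x ∈ periodicPts f) (hU : MapsTo f U U)
    (ht : ∀ o ∈ t, o ∈ orbitFinset f '' U) : ((t.biUnion id : Finset α) : Set α) ⊆ U := by
  intro x hx
  obtain ⟨o, ho, hxo⟩ := Finset.mem_biUnion.1 hx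
  obtain ⟨y, hy, rfl⟩ := ht o ho
  obtain ⟨k, rfl⟩ := (mem_orbitFinset (hf y)).1 hxo
  exact hU.iterate k hy

theorem image_biUnion_orbits (hf : ∀ x, x ∈ periodicPts f)
    (ht : ∀ o ∈ t, o ∈ range (orbitFinset f)) :
    (t.biUnion id).image (orbitFinset f) = t := by
  ext o
  simp only [Finset.mem_image, Finset.mem_biUnion, id]
  constructor
  · rintro ⟨x, ⟨o', ho', hx⟩, rfl⟩
    rwa [orbitFinset_eq_of_mem hf (ht o' ho') hx]
  · intro ho
    obtain ⟨x, rfl⟩ := ht o ho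
    exact ⟨x, ⟨_, ho, self_mem_orbitFinset (hf x)⟩, rfl⟩

theorem biUnion_image_orbitFinset (hf : ∀ x, x ∈ periodicPts f) {S : Finset α}
    (hS : MapsTo f S S) : (S.image (orbitFinset f)).biUnion id = S := by
  refine Finset.Subset.antisymm (Finset.biUnion_subset.2 fun o ho => ?_) fun x hx => ?_
  · obtain ⟨x, hx, rfl⟩ := Finset.mem_image.1 ho
    exact orbitFinset_subset hf hS hx
  · exact Finset.mem_biUnion.2
      ⟨_, Finset.mem_image_of_mem _ hx, self_mem_orbitFinset (hf x)⟩

end BiUnion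

theorem ncard_stableOfCard (hf : ∀ x, x ∈ periodicPts f) (hU : MapsTo f U U) {n B : ℕ}
    (hn : n ≤ B) {O : Finset (Finset α)} (hO : ∀ o, o ∈ O ↔ o ∈ orbitFinset f '' U ∧ o.card ≤ B) :
    (stableOfCard f U n).ncard = (O.powerset.filter fun t => ∑ o ∈ t, o.card = n).card := by
  classical
  have hmem {t : Finset (Finset α)} (ht : t ⊆ O) : ∀ o ∈ t, o ∈ range (orbitFinset f) :=
    fun o ho => image_subset_range _ _ ((hO o).1 (ht ho)).1
  rw [← ncard_coe_finset]
  refine ncard_congr (fun S _ => S.image (orbitFinset f)) ?_ ?_ ?_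
  · rintro S ⟨rfl, hS, hSU⟩
    have himage : S.image (orbitFinset f) ⊆ O := by
      refine Finset.image_subset_iff.2 fun x hx => (hO _).2 ⟨mem_image_of_mem _ (hSU hx), ?_⟩
      exact (Finset.card_le_card (orbitFinset_subset hf hS hx)).trans hn
    rw [Finset.mem_coe, Finset.mem_filter, Finset.mem_powerset]
    exact ⟨himage, by
      rw [← card_biUnion_orbits hf (hmem himage), biUnion_image_orbitFinset hf hS]⟩
  · intro S T hS hT hST
    rw [← biUnion_image_orbitFinset hf hS.2.1, hST, biUnion_image_orbitFinset hf hT.2.1]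
  · intro t ht
    rw [Finset.mem_coe, Finset.mem_filter, Finset.mem_powerset] at ht
    obtain ⟨htO, rfl⟩ := ht
    exact ⟨t.biUnion id, ⟨card_biUnion_orbits hf (hmem htO), mapsTo_biUnion_orbits hf (hmem htO),
      biUnion_orbits_subset hf hU fun o ho => ((hO o).1 (htO ho)).1⟩,
      image_biUnion_orbits hf (hmem htO)⟩

end StableSets

section Counting

open Function Set

variable {F K : Type*} [Field F] [StarRing F] [Field K] [Algebra F K] {τ : K →+* K} {q M : ℕ}
  {x y : K}

namespace IsConjFrobenius

theorem numSepPowerClasses_eq [PerfectField F] [IsAlgClosed K] (h : IsConjFrobenius F τ q)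
    (hM : M ≠ 0) (n : ℕ) :
    numSepPowerClasses (starRingEnd F) M n =
      (stableOfCard (conjInv τ) {x | HasConjInvRoot τ M x} n).ncard := by
  let T : Set (unitaryGrp (starRingEnd F) n) := {A | IsSeparableMat A.val.val ∧ ∃ B, B ^ M = A}
  have hspec (A : unitaryGrp (starRingEnd F) n) (hA : IsSeparableMat A.val.val) :
      ∃ S : Finset K, HasSimpleSpectrum A.val.val S := exists_hasSimpleSpectrum hA
  choose! E hE using hspec
  have hclasses : {c : ConjClasses (unitaryGrp (starRingEnd F) n) | c.carrier ⊆ T} =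
      ConjClasses.mk '' T := by
    refine Set.ext fun c => ⟨fun hc => ?_, ?_⟩
    · obtain ⟨A, rfl⟩ := ConjClasses.exists_rep c
      exact ⟨A, hc ConjClasses.mem_carrier_mk, rfl⟩
    · rintro ⟨A, ⟨hA, B, rfl⟩, rfl⟩ A' hA'
      obtain ⟨C, rfl⟩ := isConj_iff.1 (ConjClasses.mk_eq_mk_iff_isConj.1
        (ConjClasses.mem_carrier_iff_mk_eq.1 hA').symm)
      exact ⟨(hasSimpleSpectrum_conj (hE _ hA) C).squarefree_charpoly, C * B * C⁻¹, conj_pow⟩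
  have hstable : stableOfCard (conjInv τ) {x | HasConjInvRoot τ M x} n = E '' T := by
    refine Set.ext fun S => ⟨?_, ?_⟩
    · rintro ⟨hcard, hS, hroot⟩
      obtain ⟨A, hA⟩ := exists_unitaryGrp_hasSimpleSpectrum h hcard (fun h0 => (hroot h0).1 rfl) hS
      exact ⟨A, ⟨hA.squarefree_charpoly, (exists_pow_eq_iff_hasConjInvRoot h hA hM).2 hroot⟩,
        (hE A hA.squarefree_charpoly).unique hA⟩
    · rintro ⟨A, ⟨hsep, hA⟩, rfl⟩
      exact ⟨(hE A hsep).card_eq.trans (Fintype.card_fin n),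
        (mem_unitaryGrp_iff.1 A.2).mapsTo_conjInv h isUnit_antidiagMat (hE A hsep),
        (exists_pow_eq_iff_hasConjInvRoot h (hE A hsep) hM).1 hA⟩
  rw [hstable, ← ncard_image_eq_ncard_image (f := ConjClasses.mk), ← hclasses]
  · rfl
  · intro A hA B hB
    rw [ConjClasses.mk_eq_mk_iff_isConj]
    exact isConj_iff_of_hasSimpleSpectrum h (hE A hA.1) (hE B hB.1)

variable [Algebra.IsAlgebraic F K]

theorem sym2_minpoly_eq_iff (h : IsConjFrobenius F τ q) :
    s(minpoly F x, minpoly F (conjInv τ x)) = s(minpoly F y, minpoly F (conjInv τ y)) ↔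
      orbitFinset (conjInv τ) x = orbitFinset (conjInv τ) y := by
  rw [orbitFinset_eq_iff (h.mem_periodicPts_conjInv x) (h.mem_periodicPts_conjInv y)]
  simp only [Sym2.eq_iff, h.minpoly_eq_minpoly_iff]
  constructor
  · rintro (⟨⟨k, hk⟩, -⟩ | ⟨-, k, hk⟩)
    · exact ⟨2 * k, hk⟩
    · exact ⟨2 * k + 1, hk⟩
  · rintro ⟨k, rfl⟩
    rcases Nat.even_or_odd' k with ⟨j, rfl | rfl⟩
    · refine Or.inl ⟨⟨j, rfl⟩, j, ?_⟩
      rw [← iterate_succ_apply, iterate_succ_apply']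
    · refine Or.inr ⟨⟨j + 1, ?_⟩, j, rfl⟩
      rw [← iterate_succ_apply' (conjInv τ)]
      rfl

variable [IsAlgClosed K]

theorem NtildeM_eq (h : IsConjFrobenius F τ q) (hM : M ≠ 0) {d : ℕ} (hd : Odd d) :
    NtildeM (starRingEnd F) M d =
      (orbitsOfCard (conjInv τ) {x | HasConjInvRoot τ M x} d).ncard := by
  let T : Set K := {x | HasConjInvRoot τ M x ∧ minimalPeriod (conjInv τ) x = d}
  have hpolys : {f : F[X] | IsMtildePowerPoly (starRingEnd F) M f ∧ f.natDegree = d} =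
      minpoly F '' T := by
    refine Set.ext fun f => ⟨?_, ?_⟩
    · rintro ⟨hf, hfd⟩
      obtain ⟨x, hx0, rfl⟩ := exists_minpoly_eq (K := K) hf.1.1 hf.1.2.1 hf.1.2.2.1
      obtain ⟨hodd, hx⟩ := (h.isMtildePowerPoly_minpoly_iff hM hx0).1 hf
      exact ⟨x, ⟨hx, (h.natDegree_minpoly_of_odd hodd).symm.trans hfd⟩, rfl⟩
    · rintro ⟨x, ⟨hx, rfl⟩, rfl⟩
      exact ⟨(h.isMtildePowerPoly_minpoly_iff hM hx.1).2 ⟨hd, hx⟩, h.natDegree_minpoly_of_odd hd⟩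
  have horbits : orbitsOfCard (conjInv τ) {x | HasConjInvRoot τ M x} d =
      orbitFinset (conjInv τ) '' T := orbitsOfCard_eq_image _ _ _
  rw [horbits, ← ncard_image_eq_ncard_image (f := minpoly F), ← hpolys]
  · rfl
  · rintro x ⟨-, hx⟩ y ⟨-, hy⟩
    rw [← h.sym2_minpoly_eq_iff (F := F), h.minpoly_conjInv_eq_iff.2 (hx ▸ hd),
      h.minpoly_conjInv_eq_iff.2 (hy ▸ hd), Sym2.eq_iff, and_self, or_self]

theorem RtildeM_eq (h : IsConjFrobenius F τ q) (M d : ℕ) :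
    RtildeM (starRingEnd F) M d =
      (orbitsOfCard (conjInv τ) {x | HasConjInvRoot τ M x} (2 * d)).ncard := by
  let T : Set K := {x | HasConjInvRoot τ M x ∧ minimalPeriod (conjInv τ) x = 2 * d}
  have hpairs : {P : Sym2 F[X] | ∃ g : F[X], IsMPowerPoly M g ∧ g.coeff 0 ≠ 0 ∧ g.natDegree = d ∧
      g ≠ tildePoly (starRingEnd F) g ∧ P = s(g, tildePoly (starRingEnd F) g)} =
      (fun x => s(minpoly F x, minpoly F (conjInv τ x))) '' T := by
    refine Set.ext fun P => ⟨?_, ?_⟩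
    · rintro ⟨g, hg, hg0, rfl, hne, rfl⟩
      obtain ⟨x, hx0, rfl⟩ := exists_minpoly_eq (K := K) hg.1 hg.2.1 hg0
      rw [h.tildePoly_minpoly hx0] at hne ⊢
      have heven := Nat.not_odd_iff_even.1 (mt h.minpoly_conjInv_eq_iff.2 hne.symm)
      exact ⟨x, ⟨(h.isMPowerPoly_minpoly_iff hx0 heven).1 hg,
        (h.two_mul_natDegree_minpoly_of_even heven).symm⟩, rfl⟩
    · rintro ⟨x, ⟨hx, hd⟩, rfl⟩
      have heven : Even (minimalPeriod (conjInv τ) x) := hd ▸ even_two_mul d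
      have hdeg := (h.two_mul_natDegree_minpoly_of_even heven).trans hd
      refine ⟨minpoly F x, (h.isMPowerPoly_minpoly_iff hx.1 heven).2 hx,
        minpoly.coeff_zero_ne_zero (Algebra.IsIntegral.isIntegral x) hx.1, by omega, ?_, ?_⟩
      · rw [h.tildePoly_minpoly hx.1]
        exact fun heq => Nat.not_odd_iff_even.2 heven (h.minpoly_conjInv_eq_iff.1 heq.symm)
      · rw [h.tildePoly_minpoly hx.1]
  have horbits : orbitsOfCard (conjInv τ) {x | HasConjInvRoot τ M x} (2 * d) =
      orbitFinset (conjInv τ) '' T := orbitsOfCard_eq_image _ _ _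
  rw [horbits, ← ncard_image_eq_ncard_image fun x _ y _ => h.sym2_minpoly_eq_iff, ← hpairs]
  rfl

end IsConjFrobenius

end Counting

section FiniteFields

open Function

variable {F K : Type*} [Field F]

theorem exists_add_pow_ne_zero [Fintype F] {n : ℕ} (hn : 2 ≤ n) (hF : n < Fintype.card F) :
    ∃ a : F, a + a ^ n ≠ 0 := by
  by_contra! hall
  have hdeg : (X ^ n + X : F[X]).natDegree = n := by
    rw [natDegree_add_eq_left_of_natDegree_lt (by rw [natDegree_X_pow, natDegree_X]; omega),
      natDegree_X_pow]
  have hne : (X ^ n + X : F[X]) ≠ 0 := ne_zero_of_natDegree_gt (n := 0) (by omega)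
  have hcard := card_le_degree_of_subset_roots (p := X ^ n + X) (Z := Finset.univ) fun a _ => by
    rw [mem_roots hne, IsRoot.def, eval_add, eval_pow, eval_X, add_comm, hall]
  rw [hdeg, Finset.card_univ] at hcard
  omega

variable [Field K] [Algebra F K]

theorem exists_algebraMap_eq_of_pow_card_eq [Fintype F] {x : K} (hx : x ^ Fintype.card F = x) :
    ∃ a : F, algebraMap F K a = x := by
  have hsplits : (X ^ Fintype.card F - X : F[X]).Splits := by
    simpa only [Algebra.algebraMap_self, Polynomial.map_id] using
      (FiniteField.isSplittingField_sub F F).splits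
  refine hsplits.mem_range_of_isRoot
    (FiniteField.X_pow_card_sub_X_ne_zero F Fintype.one_lt_card) ?_
  rw [IsRoot.def, eval_map_algebraMap, map_sub, map_pow, aeval_X, hx, sub_self]

theorem exists_pow_card_pow_eq (F : Type*) {K : Type*} [Field F] [Fintype F] [Field K]
    [Algebra F K] [Algebra.IsAlgebraic F K] (x : K) :
    ∃ d, 0 < d ∧ x ^ Fintype.card F ^ d = x := by
  have : FiniteDimensional F (IntermediateField.adjoin F {x}) :=
    IntermediateField.adjoin.finiteDimensional (Algebra.IsIntegral.isIntegral x)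
  have : Finite (IntermediateField.adjoin F {x}) := Module.finite_of_finite F
  have := Fintype.ofFinite (IntermediateField.adjoin F {x})
  refine ⟨Module.finrank F (IntermediateField.adjoin F {x}), Module.finrank_pos, ?_⟩
  rw [← Module.card_eq_pow_finrank]
  exact congrArg Subtype.val (FiniteField.pow_card (IntermediateField.AdjoinSimple.gen F x))

/-- The star ring structure with `star = σ`, for an involutive endomorphism `σ` of a commutative
ring. -/
abbrev starRingOfInvolutive {R : Type*} [CommSemiring R] (σ : R →+* R) (hσ : Involutive σ) :
    StarRing R where
  star := σ
  star_involutive := hσ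
  star_mul a b := (map_mul σ a b).trans (mul_comm _ _)
  star_add := map_add σ

namespace IsConjFrobenius

variable [StarRing F] {τ : K →+* K} {q : ℕ}

theorem of_card [Fintype F] [Algebra.IsAlgebraic F K] (hq : 2 ≤ q) (hF : Fintype.card F = q ^ 2)
    (hstar : ∀ a : F, star a = a ^ q) (hτ : ∀ x, τ x = x ^ q) : IsConjFrobenius F τ q where
  two_le := hq
  map_eq_pow := hτ
  map_algebraMap a := by rw [hτ, hstar, map_pow]
  exists_algebraMap_eq x hx :=
    exists_algebraMap_eq_of_pow_card_eq (by rwa [hτ, hτ, ← pow_mul, ← sq, ← hF] at hx)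
  mem_periodicPts x := by
    obtain ⟨d, hd, hx⟩ := exists_pow_card_pow_eq F x
    refine mk_mem_periodicPts (n := 2 * d) (by omega) ?_
    rwa [IsPeriodicPt, IsFixedPt, funext hτ, pow_iterate, pow_mul, ← hF]
  exists_add_star_ne_zero := by
    simpa only [hstar] using exists_add_pow_ne_zero hq (hF ▸ lt_self_pow₀ (by omega) one_lt_two)

theorem finite_minimalPeriod_le (h : IsConjFrobenius F τ q) (B : ℕ) :
    {x | minimalPeriod (conjInv τ) x ≤ B}.Finite := by
  have hN : 1 < q ^ (2 * B.factorial) :=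
    Nat.one_lt_pow (mul_ne_zero two_ne_zero B.factorial_ne_zero) h.two_le
  refine (finite_setOfPred_isRoot
    (FiniteField.X_pow_card_sub_X_ne_zero K hN)).subset fun x hx => ?_
  have hpos := minimalPeriod_pos_of_mem_periodicPts (h.mem_periodicPts_conjInv x)
  have hper : IsPeriodicPt (conjInv τ) (2 * B.factorial) x :=
    ((isPeriodicPt_minimalPeriod _ x).trans_dvd (Nat.dvd_factorial hpos hx)).const_mul 2
  rw [IsPeriodicPt, conjInv_iterate_two_mul, funext h.map_eq_pow, pow_iterate] at hper
  exact (eval_sub ..).trans (by rw [eval_pow, eval_X, sub_eq_zero, hper.eq])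

end IsConjFrobenius

end FiniteFields

section GeneratingFunction

open Function

theorem coeff_prod_one_add_X_pow {R ι : Type*} [CommSemiring R] (s : Finset ι) (e : ι → ℕ)
    (n : ℕ) : PowerSeries.coeff n (∏ i ∈ s, ((1 : PowerSeries R) + PowerSeries.X ^ e i)) =
      ((s.powerset.filter fun t => ∑ i ∈ t, e i = n).card : R) := by
  classical
  rw [Finset.prod_one_add, map_sum, Finset.card_filter, Nat.cast_sum]
  refine Finset.sum_congr rfl fun t _ => ?_
  rw [Finset.prod_pow_eq_pow_sum, PowerSeries.coeff_X_pow, Nat.cast_ite, Nat.cast_one,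
    Nat.cast_zero]
  exact if_congr eq_comm rfl rfl

theorem coeff_prod_orbits {R α : Type*} [CommSemiring R] {f : α → α} {U : Set α}
    (hf : ∀ x, x ∈ periodicPts f) (hU : Set.MapsTo f U U)
    (hfin : ∀ B, {x | minimalPeriod f x ≤ B}.Finite) {n B : ℕ} (hn : n ≤ B) :
    PowerSeries.coeff n (∏ m ∈ Finset.Icc 1 B,
        ((1 : PowerSeries R) + PowerSeries.X ^ m) ^ (orbitsOfCard f U m).ncard) =
      ((stableOfCard f U n).ncard : R) := by
  classical
  have hOfin : {o ∈ orbitFinset f '' U | o.card ≤ B}.Finite := by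
    refine ((hfin B).image (orbitFinset f)).subset ?_
    rintro _ ⟨⟨x, -, rfl⟩, hx⟩
    exact ⟨x, (card_orbitFinset f x).symm.trans_le hx, rfl⟩
  set O := hOfin.toFinset
  have hO (o : Finset α) : o ∈ O ↔ o ∈ orbitFinset f '' U ∧ o.card ≤ B := hOfin.mem_toFinset
  have hcard : ∀ o ∈ O, o.card ∈ Finset.Icc 1 B := by
    intro o ho
    obtain ⟨⟨x, -, rfl⟩, hB⟩ := (hO o).1 ho
    exact Finset.mem_Icc.2 ⟨Finset.card_pos.2 ⟨x, self_mem_orbitFinset (hf x)⟩, hB⟩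
  have hfiber : ∀ m ∈ Finset.Icc 1 B,
      (orbitsOfCard f U m).ncard = (O.filter fun o => o.card = m).card := by
    intro m hm
    rw [← Set.ncard_coe_finset]
    congr 1 with o
    rw [Finset.mem_coe, Finset.mem_filter, hO]
    exact ⟨fun ho => ⟨⟨ho.1, ho.2.trans_le (Finset.mem_Icc.1 hm).2⟩, ho.2⟩,
      fun ho => ⟨ho.1.1, ho.2⟩⟩
  rw [ncard_stableOfCard hf hU hn hO, ← coeff_prod_one_add_X_pow,
    ← Finset.prod_fiberwise_of_maps_to' hcard fun m => (1 : PowerSeries R) + PowerSeries.X ^ m]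
  refine congrArg _ (Finset.prod_congr rfl fun m hm => ?_)
  rw [Finset.prod_const, hfiber m hm]

theorem le_order_one_add_X_pow_pow_sub_one {R : Type*} [CommRing R] (e a : ℕ) :
    (e : ℕ∞) ≤ (((1 : PowerSeries R) + PowerSeries.X ^ e) ^ a - 1).order := by
  refine PowerSeries.nat_le_order _ _ (PowerSeries.X_pow_dvd_iff.1 ?_)
  have hdvd := sub_one_dvd_pow_sub_one ((1 : PowerSeries R) + PowerSeries.X ^ e) a
  rwa [add_sub_cancel_left] at hdvd

theorem multipliable_one_add_X_pow_pow {e : ℕ → ℕ} (he : Filter.Tendsto e .atTop .atTop)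
    (a : ℕ → ℕ) : Multipliable fun k => ((1 : PowerSeries ℚ) + PowerSeries.X ^ e k) ^ a k := by
  let _ : TopologicalSpace ℚ := ⊥
  have horder : Filter.Tendsto
      (fun k => (((1 : PowerSeries ℚ) + PowerSeries.X ^ e k) ^ a k - 1).order) .atTop (nhds ⊤) :=
    ENat.tendsto_nhds_top_iff_natCast_lt.2 fun n => (he.eventually_gt_atTop n).mono fun k hk =>
      (Nat.cast_lt.2 hk).trans_le (le_order_one_add_X_pow_pow_sub_one (e k) (a k))
  simpa only [add_sub_cancel] using
    PowerSeries.WithPiTopology.multipliable_one_add_of_tendsto_order_atTop_nhds_top ℚ horder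

theorem tprod_mul_tprod_eq {f g : ℕ → PowerSeries ℚ} (hf : Multipliable f) (hg : Multipliable g)
    {c : PowerSeries ℚ} (hc : ∀ n, ∃ N, ∀ B ≥ N,
      PowerSeries.coeff n (∏ k ∈ Finset.range B, (f k * g k)) = PowerSeries.coeff n c) :
    (∏' k, f k) * ∏' k, g k = c := by
  let _ : TopologicalSpace ℚ := ⊥
  have : DiscreteTopology ℚ := ⟨rfl⟩
  have : IsTopologicalSemiring (PowerSeries ℚ) :=
    PowerSeries.WithPiTopology.instIsTopologicalSemiring ℚ
  have : T2Space (PowerSeries ℚ) := PowerSeries.WithPiTopology.instT2Space ℚ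
  rw [← hf.tprod_mul hg]
  refine tendsto_nhds_unique (hf.mul hg).hasProd.tendsto_prod_nat ?_
  refine (PowerSeries.WithPiTopology.tendsto_iff_coeff_tendsto ℚ _ _ _).2 fun n => ?_
  obtain ⟨N, hN⟩ := hc n
  exact tendsto_const_nhds.congr' (Filter.eventually_atTop.2 ⟨N, fun B hB => (hN B hB).symm⟩)

theorem prod_range_odd_mul_even {R : Type*} [CommMonoid R] (g : ℕ → R) (B : ℕ) :
    ∏ k ∈ Finset.range B, (g (2 * k + 1) * g (2 * (k + 1))) = ∏ m ∈ Finset.Icc 1 (2 * B), g m := by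
  induction B with
  | zero => rfl
  | succ B ih =>
    rw [Finset.prod_range_succ, ih, show 2 * (B + 1) = 2 * B + 1 + 1 by ring,
      Finset.prod_Icc_succ_top (by omega), Finset.prod_Icc_succ_top (by omega), mul_assoc]

theorem IsConjFrobenius.coeff_prod_eq_numSepPowerClasses {R F K : Type*} [CommSemiring R]
    [Field F] [StarRing F] [PerfectField F] [Field K] [Algebra F K] [Algebra.IsAlgebraic F K]
    [IsAlgClosed K] {τ : K →+* K} {q M : ℕ} (h : IsConjFrobenius F τ q) (hM : M ≠ 0) {n B : ℕ}
    (hn : n ≤ B) :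
    PowerSeries.coeff n (∏ k ∈ Finset.range B,
        (((1 : PowerSeries R) + PowerSeries.X ^ (2 * k + 1)) ^
            NtildeM (starRingEnd F) M (2 * k + 1) *
          ((1 : PowerSeries R) + PowerSeries.X ^ (2 * (k + 1))) ^
            RtildeM (starRingEnd F) M (k + 1))) =
      (numSepPowerClasses (starRingEnd F) M n : R) := by
  have hU : Set.MapsTo (conjInv τ) {x | HasConjInvRoot τ M x} {x | HasConjInvRoot τ M x} :=
    fun x hx => HasConjInvRoot.apply hx h
  simp only [h.NtildeM_eq hM (odd_two_mul_add_one _), h.RtildeM_eq]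
  rw [prod_range_odd_mul_even fun m => ((1 : PowerSeries R) + PowerSeries.X ^ m) ^
      (orbitsOfCard (conjInv τ) {x | HasConjInvRoot τ M x} m).ncard,
    h.numSepPowerClasses_eq hM]
  exact coeff_prod_orbits h.mem_periodicPts_conjInv hU h.finite_minimalPeriod_le (by omega)

theorem IsConjFrobenius.numSepPowerClasses_zero {F K : Type*} [Field F] [StarRing F]
    [PerfectField F] [Field K] [Algebra F K] [IsAlgClosed K] {τ : K →+* K} {q M : ℕ}
    (h : IsConjFrobenius F τ q) (hM : M ≠ 0) : numSepPowerClasses (starRingEnd F) M 0 = 1 := by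
  rw [h.numSepPowerClasses_eq hM, ncard_stableOfCard_zero]

end GeneratingFunction

/-- Generating function for the conjugacy classes of separable `M`-th powers in `U(n,q²)`.
Odd `d` are enumerated as `2k+1` and `d ≥ 1` as `k+1`; both infinite products converge. -/
theorem statement6 (p ℓ q : ℕ) (hp : p.Prime) (hℓ : 0 < ℓ) (hq : q = p ^ ℓ)
    (F : Type*) [Field F] [Fintype F] (hF : Fintype.card F = q ^ 2)
    (σ : F →+* F) (hσ : ∀ x : F, σ x = x ^ q)
    (M : ℕ) (hM : 2 ≤ M) :
    Multipliable (fun k : ℕ => ((1 : PowerSeries ℚ) + PowerSeries.X ^ (2 * k + 1)) ^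
        NtildeM σ M (2 * k + 1)) ∧
    Multipliable (fun k : ℕ => ((1 : PowerSeries ℚ) + PowerSeries.X ^ (2 * (k + 1))) ^
        RtildeM σ M (k + 1)) ∧
    (PowerSeries.mk fun n => if n = 0 then (1 : ℚ) else (numSepPowerClasses σ M n : ℚ)) =
      (∏' k : ℕ, ((1 : PowerSeries ℚ) + PowerSeries.X ^ (2 * k + 1)) ^
          NtildeM σ M (2 * k + 1)) *
      ∏' k : ℕ, ((1 : PowerSeries ℚ) + PowerSeries.X ^ (2 * (k + 1))) ^
          RtildeM σ M (k + 1) := by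
  have : Fact p.Prime := ⟨hp⟩
  have : CharP F p := charP_of_card_eq_prime_pow (f := ℓ * 2) (by rw [hF, hq, pow_mul])
  have : CharP (AlgebraicClosure F) p :=
    charP_of_injective_algebraMap (algebraMap F (AlgebraicClosure F)).injective p
  let _ : StarRing F := starRingOfInvolutive σ fun a => by
    rw [hσ, hσ, ← pow_mul, ← sq, ← hF, FiniteField.pow_card]
  have h : IsConjFrobenius F (iterateFrobenius (AlgebraicClosure F) p ℓ) q :=
    .of_card (hq ▸ hp.two_le.trans (Nat.le_self_pow hℓ.ne' p)) hF hσ fun x => hq ▸ rfl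
  have hM0 : M ≠ 0 := Nat.ne_zero_of_lt hM
  have hodd := multipliable_one_add_X_pow_pow (e := fun k => 2 * k + 1)
    (Filter.tendsto_atTop_mono (fun k => show k ≤ _ by omega) Filter.tendsto_id)
    fun k => NtildeM σ M (2 * k + 1)
  have heven := multipliable_one_add_X_pow_pow (e := fun k => 2 * (k + 1))
    (Filter.tendsto_atTop_mono (fun k => show k ≤ _ by omega) Filter.tendsto_id)
    fun k => RtildeM σ M (k + 1)
  refine ⟨hodd, heven, (tprod_mul_tprod_eq hodd heven fun n => ⟨n, fun B hB => ?_⟩).symm⟩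
  refine (h.coeff_prod_eq_numSepPowerClasses hM0 hB).trans ?_
  rw [PowerSeries.coeff_mk]
  split_ifs with hn
  · rw [hn, h.numSepPowerClasses_zero hM0, Nat.cast_one]
  · rfl
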